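/- For each k ∈ {2,3,4,5}, diam(k) = π − δ*_k, and this value is attained: the set S_k consisting of the k chords of length a*_k obtained from one fixed chord of length a*_k by rotating it about the center by the angles jπ/k for j = 0,1,…,k−1 satisfies diam(S_k) = π − δ*_k. -/

import Mathlib

open Real MeasureTheory

/-- Arc distance between points on the unit circle, given by their polar angles:
the length of the shorter arc between them. -/
noncomputable def arcDist (p q : ℝ) : ℝ := ⨅ n : ℤ, |p - q + 2 * π * n|

/-- Euclidean length of the chord between the circle points with angles `u` and `v`. -/
noncomputable def chordLen (u v : ℝ) : ℝ := 2 * Real.sin (arcDist u v / 2)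

/-- A pair of angles is a genuine shortcut (chord) if its endpoints are distinct points. -/
def IsShortcut (s : ℝ × ℝ) : Prop := arcDist s.1 s.2 ≠ 0

/-- δ(a) = arcsin(a/2) - a/2. -/
noncomputable def sdelta (a : ℝ) : ℝ := Real.arcsin (a / 2) - a / 2

/-- Cost of a path that starts at `p`, fully traverses the listed chords in order
(travelling along the circle in between), and ends at `q`. -/
noncomputable def walkCost (q : ℝ) : ℝ → List (ℝ × ℝ) → ℝ
  | p, [] => arcDist p q
  | p, e :: L => arcDist p e.1 + chordLen e.1 e.2 + walkCost q e.2 L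

/-- Shortest-path distance from `p` to `q` using the shortcuts of `S`
(each usable in either orientation, and always traversed completely). -/
noncomputable def dS (S : Finset (ℝ × ℝ)) (p q : ℝ) : ℝ :=
  sInf {c | ∃ L : List (ℝ × ℝ), (∀ e ∈ L, e ∈ S ∨ (e.2, e.1) ∈ S) ∧ c = walkCost q p L}

/-- Diameter of the circle augmented with the shortcuts of `S`. -/
noncomputable def diamS (S : Finset (ℝ × ℝ)) : ℝ :=
  sSup {d | ∃ p q : ℝ, d = dS S p q}

/-- diam(k): the optimal diameter achievable with `k` shortcuts. -/
noncomputable def diamK (k : ℕ) : ℝ :=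
  sInf {d | ∃ S : Finset (ℝ × ℝ), S.card = k ∧ (∀ s ∈ S, IsShortcut s) ∧ d = diamS S}

/-- Distance from `p` to `q` when a single shortcut with endpoints `u`, `v` is available. -/
noncomputable def dOne (u v p q : ℝ) : ℝ :=
  min (arcDist p q)
    (min (arcDist p u + chordLen u v + arcDist v q)
      (arcDist p v + chordLen u v + arcDist u q))

/-- Two angles represent the same point of the circle. -/
def SamePoint (p q : ℝ) : Prop := arcDist p q = 0

/-- Two pairs of angles represent the same chord of the circle. -/
def SameChord (s t : ℝ × ℝ) : Prop :=
  (SamePoint s.1 t.1 ∧ SamePoint s.2 t.2) ∨ (SamePoint s.1 t.2 ∧ SamePoint s.2 t.1)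

/-- `p` lies in the deep umbra of the shortcut from `u` to `u + β`
(where `0 < β ≤ π` is the counterclockwise arc spanned by the shortcut):
`p` lies in the inner umbra, and `|p u'| + |s| ≥ d(p, v')` where `u'` is the
endpoint closer to `p` and `v'` the other one. -/
def InDeepUmbra (u β p : ℝ) : Prop :=
  (∃ t : ℝ, sdelta (chordLen u (u + β)) ≤ t ∧ t ≤ β - sdelta (chordLen u (u + β)) ∧
    arcDist p (u + t) = 0) ∧
  (arcDist p u ≤ arcDist p (u + β) →
    arcDist p (u + β) ≤ chordLen p u + chordLen u (u + β)) ∧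
  (arcDist p (u + β) ≤ arcDist p u →
    arcDist p u ≤ chordLen p (u + β) + chordLen u (u + β))

/-- `d` equals δ*_k : for `k ∈ {3,4,5}` this is `δ(a*_k)` where `a*_k + δ(a*_k) = (k-1)π/k`,
and for `k = 6` it is `δ(2) = π/2 - 1`. -/
def dstarSpec (k : ℕ) (d : ℝ) : Prop :=
  (k = 6 ∧ d = sdelta 2) ∨
    (∃ a, a ∈ Set.Icc (0 : ℝ) 2 ∧ a + sdelta a = ((k : ℝ) - 1) * π / k ∧ d = sdelta a)

/-! ### Arc distance -/

lemma arc_bdd (p q : ℝ) : BddBelow (Set.range fun n : ℤ => |p - q + 2 * π * n|) :=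
  ⟨0, by rintro _ ⟨n, rfl⟩; exact abs_nonneg _⟩

lemma arc_le (p q : ℝ) (n : ℤ) : arcDist p q ≤ |p - q + 2 * π * n| :=
  ciInf_le (arc_bdd p q) n

lemma arc_nonneg (p q : ℝ) : 0 ≤ arcDist p q := le_ciInf fun _ => abs_nonneg _

lemma arc_eq_norm (p q : ℝ) : arcDist p q = ‖((p - q : ℝ) : AddCircle (2 * π))‖ := by
  have hp : (0 : ℝ) < 2 * π := two_pi_pos
  apply le_antisymm
  · rw [AddCircle.norm_eq]
    have := arc_le p q (-round ((2 * π)⁻¹ * (p - q)))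
    refine this.trans (le_of_eq ?_)
    push_cast
    congr 1; ring
  · refine le_ciInf fun n => ?_
    have h1 : ((p - q : ℝ) : AddCircle (2 * π)) = ((p - q + 2 * π * n : ℝ) : AddCircle (2 * π)) := by
      have : ((p - q + 2 * π * n : ℝ)) = (p - q) + n • (2 * π) := by
        simp; ring
      rw [this, AddCircle.coe_add, AddCircle.coe_zsmul, AddCircle.coe_period, smul_zero, add_zero]
    rw [h1]
    exact QuotientAddGroup.norm_mk_le_norm

lemma arc_spec (p q : ℝ) : ∃ n : ℤ, arcDist p q = |p - q + 2 * π * n| := by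
  refine ⟨-round ((2 * π)⁻¹ * (p - q)), ?_⟩
  rw [arc_eq_norm, AddCircle.norm_eq]
  push_cast
  congr 1; ring

lemma arc_le_pi (p q : ℝ) : arcDist p q ≤ π := by
  rw [arc_eq_norm]
  have := AddCircle.norm_le_half_period (2 * π) (x := ((p - q : ℝ) : AddCircle (2 * π)))
    two_pi_pos.ne'
  rw [abs_of_pos two_pi_pos] at this
  linarith

lemma arc_self (p : ℝ) : arcDist p p = 0 := by
  rw [arc_eq_norm]; simp

lemma arc_comm (p q : ℝ) : arcDist p q = arcDist q p := by
  rw [arc_eq_norm, arc_eq_norm, ← norm_neg, ← AddCircle.coe_neg, neg_sub]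

lemma arc_tri (p q r : ℝ) : arcDist p r ≤ arcDist p q + arcDist q r := by
  rw [arc_eq_norm, arc_eq_norm, arc_eq_norm]
  have : (p - r : ℝ) = (p - q) + (q - r) := by ring
  rw [this, AddCircle.coe_add]
  exact norm_add_le _ _

lemma arc_le_abs (p q : ℝ) : arcDist p q ≤ |p - q| := by
  simpa using arc_le p q 0

lemma arc_of_abs_le {p q : ℝ} (h : |p - q| ≤ π) : arcDist p q = |p - q| := by
  rw [arc_eq_norm, AddCircle.norm_coe_eq_abs_iff _ two_pi_pos.ne', abs_of_pos two_pi_pos]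
  linarith

lemma chord_eq (p q : ℝ) : chordLen p q = 2 * |sin ((p - q) / 2)| := by
  unfold chordLen
  obtain ⟨n, hn⟩ := arc_spec p q
  have h1 : 0 ≤ sin (arcDist p q / 2) :=
    sin_nonneg_of_nonneg_of_le_pi (by linarith [arc_nonneg p q])
      (by linarith [arc_le_pi p q, pi_pos])
  rw [← abs_of_nonneg h1, hn]
  congr 1
  have h2 : |sin (|p - q + 2 * π * n| / 2)| = |sin ((p - q + 2 * π * n) / 2)| := by
    rcases abs_cases (p - q + 2 * π * n) with h | h
    · rw [h.1]
    · rw [h.1, neg_div, sin_neg, abs_neg]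
  rw [h2]
  have : (p - q + 2 * π * n) / 2 = (p - q) / 2 + n * π := by ring
  rw [this, sin_add_int_mul_pi, abs_mul, abs_zpow, abs_neg, abs_one, one_zpow, one_mul]

lemma chord_nonneg (p q : ℝ) : 0 ≤ chordLen p q := by
  rw [chord_eq]; positivity

lemma chord_comm (p q : ℝ) : chordLen p q = chordLen q p := by
  unfold chordLen; rw [arc_comm]

lemma abs_sin_add_le (a b : ℝ) : |sin (a + b)| ≤ |sin a| + |sin b| := by
  rw [sin_add]
  calc |sin a * cos b + cos a * sin b| ≤ |sin a * cos b| + |cos a * sin b| := abs_add_le _ _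
    _ = |sin a| * |cos b| + |cos a| * |sin b| := by rw [abs_mul, abs_mul]
    _ ≤ |sin a| * 1 + 1 * |sin b| := by
        gcongr
        · exact abs_cos_le_one b
        · exact abs_cos_le_one a
    _ = _ := by ring

lemma chord_tri (p q r : ℝ) : chordLen p r ≤ chordLen p q + chordLen q r := by
  rw [chord_eq, chord_eq, chord_eq]
  have := abs_sin_add_le ((p - q) / 2) ((q - r) / 2)
  have h : (p - r) / 2 = (p - q) / 2 + (q - r) / 2 := by ring
  rw [h]; linarith

lemma chord_le_arc (p q : ℝ) : chordLen p q ≤ arcDist p q := by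
  unfold chordLen
  have := sin_le (x := arcDist p q / 2) (by linarith [arc_nonneg p q])
  linarith

/-! ### Network distance, adding the shortcuts one at a time -/

/-- Distance with the shortcuts of a list, defined recursively. -/
noncomputable def DL : List (ℝ × ℝ) → ℝ → ℝ → ℝ
  | [], p, q => arcDist p q
  | s :: S, p, q => min (DL S p q)
      (min (DL S p s.1 + chordLen s.1 s.2 + DL S s.2 q)
        (DL S p s.2 + chordLen s.1 s.2 + DL S s.1 q))

lemma DL_le_arc (S : List (ℝ × ℝ)) (p q : ℝ) : DL S p q ≤ arcDist p q := by
  induction S generalizing p q with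
  | nil => exact le_rfl
  | cons s S ih => exact (min_le_left _ _).trans (ih p q)

lemma DL_cons_le (s : ℝ × ℝ) (S : List (ℝ × ℝ)) (p q : ℝ) : DL (s :: S) p q ≤ DL S p q :=
  min_le_left _ _

lemma DL_nonneg (S : List (ℝ × ℝ)) (p q : ℝ) : 0 ≤ DL S p q := by
  induction S generalizing p q with
  | nil => exact arc_nonneg p q
  | cons s S ih =>
    have := chord_nonneg s.1 s.2
    refine le_min (ih _ _) (le_min ?_ ?_)
    · linarith [ih p s.1, ih s.2 q]
    · linarith [ih p s.2, ih s.1 q]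

lemma DL_cases (s : ℝ × ℝ) (S : List (ℝ × ℝ)) (p q : ℝ) :
    DL (s :: S) p q = DL S p q ∨
    DL (s :: S) p q = DL S p s.1 + chordLen s.1 s.2 + DL S s.2 q ∨
    DL (s :: S) p q = DL S p s.2 + chordLen s.1 s.2 + DL S s.1 q := by
  have h : DL (s :: S) p q = min (DL S p q)
      (min (DL S p s.1 + chordLen s.1 s.2 + DL S s.2 q)
        (DL S p s.2 + chordLen s.1 s.2 + DL S s.1 q)) := rfl
  rw [h]
  rcases min_choice (DL S p q) (min (DL S p s.1 + chordLen s.1 s.2 + DL S s.2 q)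
        (DL S p s.2 + chordLen s.1 s.2 + DL S s.1 q)) with h1 | h1
  · exact Or.inl h1
  · rw [h1]
    right
    exact min_choice _ _

lemma DL_le1 (s : ℝ × ℝ) (S : List (ℝ × ℝ)) (p q : ℝ) :
    DL (s :: S) p q ≤ DL S p s.1 + chordLen s.1 s.2 + DL S s.2 q :=
  (min_le_right _ _).trans (min_le_left _ _)

lemma DL_le2 (s : ℝ × ℝ) (S : List (ℝ × ℝ)) (p q : ℝ) :
    DL (s :: S) p q ≤ DL S p s.2 + chordLen s.1 s.2 + DL S s.1 q :=
  (min_le_right _ _).trans (min_le_right _ _)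

lemma DL_tri (S : List (ℝ × ℝ)) (p q r : ℝ) : DL S p r ≤ DL S p q + DL S q r := by
  induction S generalizing p q r with
  | nil => exact arc_tri p q r
  | cons s S ih =>
    have hc := chord_nonneg s.1 s.2
    have g0 := DL_cons_le s S p r
    have g1 := DL_le1 s S p r
    have g2 := DL_le2 s S p r
    have n1 := DL_nonneg S q s.1
    have n2 := DL_nonneg S q s.2
    have n3 := DL_nonneg S s.1 q
    have n4 := DL_nonneg S s.2 q
    rcases DL_cases s S p q with h | h | h <;> rcases DL_cases s S q r with h' | h' | h' <;>
      rw [h, h']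
    · linarith [ih p q r]
    · linarith [ih p q s.1]
    · linarith [ih p q s.2]
    · linarith [ih s.2 q r]
    · linarith
    · linarith [ih p s.1 r]
    · linarith [ih s.1 q r]
    · linarith [ih p s.2 r]
    · linarith

lemma DL_self (S : List (ℝ × ℝ)) (p : ℝ) : DL S p p ≤ 0 := by
  have := DL_le_arc S p p
  rwa [arc_self] at this

lemma DL_mem (S : List (ℝ × ℝ)) (e : ℝ × ℝ) (he : e ∈ S) :
    DL S e.1 e.2 ≤ chordLen e.1 e.2 ∧ DL S e.2 e.1 ≤ chordLen e.1 e.2 := by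
  induction S with
  | nil => simp at he
  | cons s S ih =>
    rcases List.mem_cons.1 he with rfl | h
    · constructor
      · linarith [DL_le1 e S e.1 e.2, DL_self S e.1, DL_self S e.2]
      · linarith [DL_le2 e S e.2 e.1, DL_self S e.1, DL_self S e.2]
    · obtain ⟨h1, h2⟩ := ih h
      exact ⟨(DL_cons_le s S _ _).trans h1, (DL_cons_le s S _ _).trans h2⟩

lemma DL_le_walk (S : List (ℝ × ℝ)) (q : ℝ) (L : List (ℝ × ℝ))
    (hL : ∀ e ∈ L, e ∈ S ∨ (e.2, e.1) ∈ S) (p : ℝ) : DL S p q ≤ walkCost q p L := by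
  induction L generalizing p with
  | nil => exact DL_le_arc S p q
  | cons e L ih =>
    have h1 := ih (fun e' he' => hL e' (List.mem_cons_of_mem _ he')) e.2
    have h2 : DL S e.1 e.2 ≤ chordLen e.1 e.2 := by
      rcases hL e List.mem_cons_self with h | h
      · exact (DL_mem S e h).1
      · have := (DL_mem S _ h).2
        rw [chord_comm] at this
        exact this
    have h3 := DL_tri S p e.1 q
    have h4 := DL_tri S e.1 e.2 q
    have h5 := DL_le_arc S p e.1
    show _ ≤ arcDist p e.1 + chordLen e.1 e.2 + walkCost q e.2 L
    linarith

lemma chord_le_DL (S : List (ℝ × ℝ)) (p q : ℝ) : chordLen p q ≤ DL S p q := by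
  induction S generalizing p q with
  | nil => exact chord_le_arc p q
  | cons s S ih =>
    rcases DL_cases s S p q with h | h | h <;> rw [h]
    · exact ih p q
    · linarith [ih p s.1, ih s.2 q, chord_tri p s.1 q, chord_tri s.1 s.2 q]
    · linarith [ih p s.2, ih s.1 q, chord_tri p s.2 q, chord_tri s.2 s.1 q, chord_comm s.1 s.2]

lemma arc_le_ratio (S : List (ℝ × ℝ)) (ρ : ℝ) (hρ : 1 ≤ ρ)
    (hS : ∀ s ∈ S, arcDist s.1 s.2 ≤ ρ * chordLen s.1 s.2) (p q : ℝ) :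
    arcDist p q ≤ ρ * DL S p q := by
  induction S generalizing p q with
  | nil =>
    show _ ≤ ρ * arcDist p q
    nlinarith [arc_nonneg p q]
  | cons s S ih =>
    have ih' := ih (fun s' h => hS s' (List.mem_cons_of_mem _ h))
    have h0 := hS s List.mem_cons_self
    rcases DL_cases s S p q with h | h | h <;> rw [h]
    · exact ih' p q
    · nlinarith [ih' p s.1, ih' s.2 q, arc_tri p s.1 q, arc_tri s.1 s.2 q]
    · nlinarith [ih' p s.2, ih' s.1 q, arc_tri p s.2 q, arc_tri s.2 s.1 q, arc_comm s.1 s.2]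

lemma min_arc_le (S : List (ℝ × ℝ)) (τ : ℝ)
    (hS : ∀ s ∈ S, τ ≤ chordLen s.1 s.2) (p q : ℝ) :
    DL S p q = arcDist p q ∨ τ ≤ DL S p q := by
  induction S generalizing p q with
  | nil => exact Or.inl rfl
  | cons s S ih =>
    have ih' := ih (fun s' h => hS s' (List.mem_cons_of_mem _ h))
    have h0 := hS s List.mem_cons_self
    rcases DL_cases s S p q with h | h | h <;> rw [h]
    · exact ih' p q
    · right; linarith [DL_nonneg S p s.1, DL_nonneg S s.2 q]
    · right; linarith [DL_nonneg S p s.2, DL_nonneg S s.1 q]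

lemma arc_sub_le (s : ℝ × ℝ) (p q : ℝ) :
    arcDist p q - (arcDist s.1 s.2 - chordLen s.1 s.2) ≤ DL [s] p q := by
  have := chord_le_arc s.1 s.2
  rcases DL_cases s [] p q with h | h | h <;> rw [h] <;> simp only [DL]
  · linarith
  · linarith [arc_tri p s.1 q, arc_tri s.1 s.2 q]
  · linarith [arc_tri p s.2 q, arc_tri s.2 s.1 q, arc_comm s.1 s.2]

/-! ### Geometry of a single shortcut -/

lemma rep_shortcut (u v θ : ℝ) (h : arcDist u v = 2 * θ) :
    ∃ m : ℝ, (∃ i j : ℤ, u = m - θ + 2 * π * i ∧ v = m + θ + 2 * π * j) ∨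
      (∃ i j : ℤ, u = m + θ + 2 * π * i ∧ v = m - θ + 2 * π * j) := by
  obtain ⟨n, hn⟩ := arc_spec u v
  rw [h] at hn
  rcases abs_cases (u - v + 2 * π * n) with h1 | h1
  · refine ⟨u - θ, Or.inr ⟨0, n, ?_, ?_⟩⟩
    · simp
    · linarith
  · refine ⟨u + θ, Or.inl ⟨0, n, ?_, ?_⟩⟩
    · simp
    · linarith

lemma int_zero_of_abs {N : ℤ} {y : ℝ} (hy : |y| < 2 * π) (h : 2 * π * N = y) : N = 0 := by
  rw [← h, abs_mul, abs_of_pos two_pi_pos] at hy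
  have h1 : |(N : ℝ)| < 1 := by
    by_contra hc
    push Not at hc
    nlinarith [pi_pos]
  have h2 : |N| < 1 := by exact_mod_cast h1
  exact Int.abs_lt_one_iff.1 h2

lemma arc_key_pos (z m θ x ρ : ℝ) (i j : ℤ) (hθ0 : 0 ≤ θ) (hθ : θ ≤ π / 2) (hx0 : 0 ≤ x)
    (hx : x ≤ π) (hρ : ρ < π)
    (h : arcDist (z - (π - x) / 2) (m - θ + 2 * π * i) +
      arcDist (m + θ + 2 * π * j) (z + (π - x) / 2) ≤ ρ) :
    arcDist z m ≤ ρ / 2 ∧ π - x - 2 * θ ≤ ρ := by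
  obtain ⟨n₁, h₁⟩ := arc_spec (z - (π - x) / 2) (m - θ + 2 * π * i)
  obtain ⟨n₂, h₂⟩ := arc_spec (m + θ + 2 * π * j) (z + (π - x) / 2)
  rw [h₁, h₂] at h
  set α := z - (π - x) / 2 - (m - θ + 2 * π * i) + 2 * π * n₁ with hα
  set β := m + θ + 2 * π * j - (z + (π - x) / 2) + 2 * π * n₂ with hβ
  obtain ⟨a1, a2⟩ := abs_le.1 (le_refl |α|)
  obtain ⟨b1, b2⟩ := abs_le.1 (le_refl |β|)
  have hN : (j - i + n₁ + n₂ : ℤ) = 0 := by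
    apply int_zero_of_abs (y := α + β - (2 * θ - π + x))
    · rw [abs_lt]; constructor <;> linarith
    · rw [hα, hβ]; push_cast; ring
  have hNr : (j : ℝ) - i + n₁ + n₂ = 0 := by exact_mod_cast hN
  have hs : α + β = 2 * θ - π + x := by
    have : α + β = 2 * θ - π + x + 2 * π * ((j : ℝ) - i + n₁ + n₂) := by rw [hα, hβ]; ring
    rw [this, hNr]; ring
  constructor
  · have h3 := arc_le z m (n₁ - i)
    have h4 : z - m + 2 * π * ((n₁ - i : ℤ) : ℝ) = (α - β) / 2 := by
      have : (n₂ : ℝ) = i - j - n₁ := by linarith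
      rw [hα, hβ, this]; push_cast; ring
    rw [h4] at h3
    refine h3.trans ?_
    rw [abs_le]; constructor <;> linarith
  · linarith

lemma arc_key_neg (z m θ x ρ : ℝ) (i j : ℤ) (hθ : θ ≤ π / 2) (hx0 : 0 ≤ x)
    (hρ : ρ < π) (hρ2 : ρ < π - x + 2 * θ)
    (h : arcDist (z - (π - x) / 2) (m + θ + 2 * π * i) +
      arcDist (m - θ + 2 * π * j) (z + (π - x) / 2) ≤ ρ) :
    arcDist z (m + π) ≤ ρ / 2 ∧ π + x - 2 * θ ≤ ρ := by
  obtain ⟨n₁, h₁⟩ := arc_spec (z - (π - x) / 2) (m + θ + 2 * π * i)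
  obtain ⟨n₂, h₂⟩ := arc_spec (m - θ + 2 * π * j) (z + (π - x) / 2)
  rw [h₁, h₂] at h
  set α := z - (π - x) / 2 - (m + θ + 2 * π * i) + 2 * π * n₁ with hα
  set β := m - θ + 2 * π * j - (z + (π - x) / 2) + 2 * π * n₂ with hβ
  obtain ⟨a1, a2⟩ := abs_le.1 (le_refl |α|)
  obtain ⟨b1, b2⟩ := abs_le.1 (le_refl |β|)
  have hN : (j - i + n₁ + n₂ - 1 : ℤ) = 0 := by
    apply int_zero_of_abs (y := α + β - (π + x - 2 * θ))
    · rw [abs_lt]; constructor <;> linarith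
    · rw [hα, hβ]; push_cast; ring
  have hNr : (j : ℝ) - i + n₁ + n₂ - 1 = 0 := by exact_mod_cast hN
  have hs : α + β = π + x - 2 * θ := by
    have : α + β = π + x - 2 * θ + 2 * π * ((j : ℝ) - i + n₁ + n₂ - 1) := by rw [hα, hβ]; ring
    rw [this, hNr]; ring
  constructor
  · have h3 := arc_le z (m + π) (n₁ - i)
    have h4 : z - (m + π) + 2 * π * ((n₁ - i : ℤ) : ℝ) = (α - β) / 2 := by
      have : (n₂ : ℝ) = 1 + i - j - n₁ := by linarith
      rw [hα, hβ, this]; push_cast; ring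
    rw [h4] at h3
    refine h3.trans ?_
    rw [abs_le]; constructor <;> linarith
  · linarith

/-- A chord sum bound gives an arc sum bound. -/
lemma arcs_of_chords (a b c d ζ : ℝ) (hζ0 : 0 ≤ ζ) (hζ : ζ ≤ π / 2)
    (h : chordLen a b + chordLen c d ≤ 2 * sin ζ) : arcDist a b + arcDist c d ≤ 2 * ζ := by
  unfold chordLen at h
  have a0 := arc_nonneg a b
  have a1 := arc_le_pi a b
  have c0 := arc_nonneg c d
  have c1 := arc_le_pi c d
  set A := arcDist a b / 2 with hA
  set B := arcDist c d / 2 with hB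
  have hpi := pi_pos
  by_contra hcon
  push Not at hcon
  have hsB : 0 ≤ sin B := sin_nonneg_of_nonneg_of_le_pi (by linarith) (by linarith)
  have hAζ : A ≤ ζ := by
    by_contra hc
    push Not at hc
    have := sin_lt_sin_of_lt_of_le_pi_div_two (x := ζ) (y := A) (by linarith) (by linarith) hc
    linarith
  have h1 : sin (ζ - A) < sin B :=
    sin_lt_sin_of_lt_of_le_pi_div_two (by linarith) (by linarith) (by linarith)
  have h2 : sin ζ ≤ sin A + sin (ζ - A) := by
    have e : ζ = A + (ζ - A) := by ring
    have sA : 0 ≤ sin A := sin_nonneg_of_nonneg_of_le_pi (by linarith) (by linarith)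
    have sZ : 0 ≤ sin (ζ - A) := sin_nonneg_of_nonneg_of_le_pi (by linarith) (by linarith)
    calc sin ζ = sin A * cos (ζ - A) + cos A * sin (ζ - A) := by rw [← sin_add, ← e]
      _ ≤ sin A * 1 + 1 * sin (ζ - A) := by
        gcongr
        · exact cos_le_one _
        · exact cos_le_one _
      _ = _ := by ring
  linarith

/-! ### Covering by measure -/

/-- The set `A` of angles is covered, modulo `2π`, by a set of measure at most `η`. -/
def Cov (A : Set ℝ) (η : ℝ) : Prop :=
  ∃ B : Set (AddCircle (2 * π)),
    (haveI : Fact ((0 : ℝ) < 2 * π) := ⟨two_pi_pos⟩; volume B ≤ ENNReal.ofReal η) ∧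
    ∀ z ∈ A, ((z : ℝ) : AddCircle (2 * π)) ∈ B

lemma cov_empty : Cov ∅ 0 := ⟨∅, by simp, by simp⟩

lemma cov_mono {A A' : Set ℝ} {η η' : ℝ} (h : Cov A η) (hA : A' ⊆ A) (hη : η ≤ η') :
    Cov A' η' := by
  obtain ⟨B, h1, h2⟩ := h
  exact ⟨B, h1.trans (ENNReal.ofReal_le_ofReal hη), fun z hz => h2 z (hA hz)⟩

lemma cov_union {A A' : Set ℝ} {η η' : ℝ} (h : Cov A η) (h' : Cov A' η') (h0 : 0 ≤ η)
    (h0' : 0 ≤ η') : Cov (A ∪ A') (η + η') := by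
  have : Fact ((0 : ℝ) < 2 * π) := ⟨two_pi_pos⟩
  obtain ⟨B, h1, h2⟩ := h
  obtain ⟨B', h1', h2'⟩ := h'
  refine ⟨B ∪ B', ?_, ?_⟩
  · rw [ENNReal.ofReal_add h0 h0']
    exact (measure_union_le _ _).trans (add_le_add h1 h1')
  · rintro z (hz | hz)
    · exact Or.inl (h2 z hz)
    · exact Or.inr (h2' z hz)

lemma cov_ball (m r : ℝ) : Cov {z | arcDist z m ≤ r} (2 * r) := by
  have : Fact ((0 : ℝ) < 2 * π) := ⟨two_pi_pos⟩
  refine ⟨Metric.closedBall ((m : ℝ) : AddCircle (2 * π)) r, ?_, ?_⟩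
  · show volume _ ≤ _
    rw [AddCircle.volume_closedBall]
    exact ENNReal.ofReal_le_ofReal (min_le_right _ _)
  · intro z hz
    rw [Metric.mem_closedBall, dist_eq_norm, ← AddCircle.coe_sub, ← arc_eq_norm]
    exact hz

lemma cov_univ {η : ℝ} (h : Cov Set.univ η) : 2 * π ≤ η := by
  have : Fact ((0 : ℝ) < 2 * π) := ⟨two_pi_pos⟩
  obtain ⟨B, h1, h2⟩ := h
  have hB : B = Set.univ := by
    ext y
    simp only [Set.mem_univ, iff_true]
    induction y using QuotientAddGroup.induction_on with
    | H z => exact h2 z trivial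
  rw [hB] at h1
  change volume _ ≤ _ at h1
  rw [AddCircle.measure_univ] at h1
  by_contra hc
  push Not at hc
  exact absurd h1 (not_le.2 ((ENNReal.ofReal_lt_ofReal_iff two_pi_pos).2 hc))

/-- Centres `z` of arcs of length `π - x` whose endpoints are at distance at most `D`. -/
def GG (S : List (ℝ × ℝ)) (x D : ℝ) : Set ℝ :=
  {z | DL S (z - (π - x) / 2) (z + (π - x) / 2) ≤ D}

lemma GG_arc (x z : ℝ) (h0 : 0 ≤ x) (h : x ≤ π) :
    arcDist (z - (π - x) / 2) (z + (π - x) / 2) = π - x := by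
  have e : z - (π - x) / 2 - (z + (π - x) / 2) = -(π - x) := by ring
  rw [arc_of_abs_le] <;> rw [e, abs_neg, abs_of_nonneg (by linarith)]
  linarith

lemma GG_nil {x D : ℝ} (h0 : 0 ≤ x) (h : x ≤ π) (hD : D < π - x) : GG [] x D = ∅ := by
  ext z
  simp only [GG, DL, Set.mem_ofPred_eq, Set.mem_empty_iff_false, iff_false, not_le]
  rw [GG_arc x z h0 h]; exact hD

lemma GG_step {s : ℝ × ℝ} {S : List (ℝ × ℝ)} {x D θ ρ : ℝ} (hs : arcDist s.1 s.2 = 2 * θ)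
    (hx0 : 0 ≤ x) (hx : x ≤ π) (hρ : ρ < π) (hρ2 : ρ < π - x + 2 * θ)
    (H : ∀ a b c d, DL S a b + DL S c d ≤ D - 2 * sin θ → arcDist a b + arcDist c d ≤ ρ) :
    ∃ m : ℝ, ∀ z ∈ GG (s :: S) x D, z ∈ GG S x D ∨
      (arcDist z m ≤ ρ / 2 ∧ π - x - 2 * θ ≤ ρ) ∨
      (arcDist z (m + π) ≤ ρ / 2 ∧ π + x - 2 * θ ≤ ρ) := by
  have hθ0 : 0 ≤ θ := by linarith [arc_nonneg s.1 s.2]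
  have hθ : θ ≤ π / 2 := by linarith [arc_le_pi s.1 s.2]
  have hc : chordLen s.1 s.2 = 2 * sin θ := by
    unfold chordLen; rw [hs]; congr 2; ring
  obtain ⟨m, hm⟩ := rep_shortcut s.1 s.2 θ hs
  refine ⟨m, fun z hz => ?_⟩
  have hz' : DL (s :: S) (z - (π - x) / 2) (z + (π - x) / 2) ≤ D := hz
  rcases DL_cases s S (z - (π - x) / 2) (z + (π - x) / 2) with h | h | h
  · left
    rw [h] at hz'
    exact hz'
  · right
    rw [h, hc] at hz'
    have h1 := H (z - (π - x) / 2) s.1 s.2 (z + (π - x) / 2) (by linarith)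
    rcases hm with ⟨i, j, e1, e2⟩ | ⟨i, j, e1, e2⟩ <;> rw [e1, e2] at h1
    · left; exact arc_key_pos z m θ x ρ i j hθ0 hθ hx0 hx hρ h1
    · right; exact arc_key_neg z m θ x ρ i j hθ hx0 hρ hρ2 h1
  · right
    rw [h, hc] at hz'
    have h1 := H (z - (π - x) / 2) s.2 s.1 (z + (π - x) / 2) (by linarith)
    rcases hm with ⟨i, j, e1, e2⟩ | ⟨i, j, e1, e2⟩ <;> rw [e1, e2] at h1
    · right; exact arc_key_neg z m θ x ρ j i hθ hx0 hρ hρ2 h1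
    · left; exact arc_key_pos z m θ x ρ j i hθ0 hθ hx0 hx hρ h1

lemma GG_step2 {s : ℝ × ℝ} {S : List (ℝ × ℝ)} {x D θ ρ η : ℝ} (hs : arcDist s.1 s.2 = 2 * θ)
    (hx0 : 0 ≤ x) (hx : x ≤ π) (hρ : ρ < π) (hρ2 : ρ < π - x + 2 * θ)
    (H : ∀ a b c d, DL S a b + DL S c d ≤ D - 2 * sin θ → arcDist a b + arcDist c d ≤ ρ)
    (hη : 0 ≤ η) (hρ0 : 0 ≤ ρ) (hc : Cov (GG S x D) η) : Cov (GG (s :: S) x D) (η + 2 * ρ) := by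
  obtain ⟨m, hm⟩ := GG_step hs hx0 hx hρ hρ2 H
  refine cov_mono (cov_union hc (cov_union (cov_ball m (ρ / 2)) (cov_ball (m + π) (ρ / 2))
    (by linarith) (by linarith)) hη (by linarith)) ?_ (by linarith)
  intro z hz
  rcases hm z hz with h | h | h
  · exact Or.inl h
  · exact Or.inr (Or.inl h.1)
  · exact Or.inr (Or.inr h.1)

lemma GG_step1 {s : ℝ × ℝ} {S : List (ℝ × ℝ)} {x D θ ρ η : ℝ} (hs : arcDist s.1 s.2 = 2 * θ)
    (hx0 : 0 ≤ x) (hx : x ≤ π) (hρ : ρ < π) (hρ2 : ρ < π - x + 2 * θ)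
    (H : ∀ a b c d, DL S a b + DL S c d ≤ D - 2 * sin θ → arcDist a b + arcDist c d ≤ ρ)
    (hη : 0 ≤ η) (hρ0 : 0 ≤ ρ) (h1 : ρ < π + x - 2 * θ)
    (hc : Cov (GG S x D) η) : Cov (GG (s :: S) x D) (η + ρ) := by
  obtain ⟨m, hm⟩ := GG_step hs hx0 hx hρ hρ2 H
  refine cov_mono (cov_union hc (cov_ball m (ρ / 2)) hη (by linarith)) ?_ (by linarith)
  intro z hz
  rcases hm z hz with h | h | h
  · exact Or.inl h
  · exact Or.inr h.1
  · exact absurd h.2 (not_le.2 h1)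

lemma GG_step0 {s : ℝ × ℝ} {S : List (ℝ × ℝ)} {x D θ ρ η : ℝ} (hs : arcDist s.1 s.2 = 2 * θ)
    (hx0 : 0 ≤ x) (hx : x ≤ π) (hρ : ρ < π) (hρ2 : ρ < π - x + 2 * θ)
    (H : ∀ a b c d, DL S a b + DL S c d ≤ D - 2 * sin θ → arcDist a b + arcDist c d ≤ ρ)
    (h0 : ρ < π - x - 2 * θ) (hc : Cov (GG S x D) η) : Cov (GG (s :: S) x D) η := by
  obtain ⟨m, hm⟩ := GG_step hs hx0 hx hρ hρ2 H
  refine cov_mono hc ?_ le_rfl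
  intro z hz
  rcases hm z hz with h | h | h
  · exact h
  · exact absurd h.2 (not_le.2 h0)
  · exact absurd h.2 (not_le.2 (by linarith))

/-! ### Providers of the hypothesis on detours -/

lemma prov_E (S : List (ℝ × ℝ)) {R ζ : ℝ} (h0 : 0 ≤ ζ) (h1 : ζ ≤ π / 2) (h : R ≤ 2 * sin ζ)
    (a b c d : ℝ) (hR : DL S a b + DL S c d ≤ R) : arcDist a b + arcDist c d ≤ 2 * ζ :=
  arcs_of_chords a b c d ζ h0 h1 (by linarith [chord_le_DL S a b, chord_le_DL S c d])

lemma prov_X (S : List (ℝ × ℝ)) {R : ℝ} (h : ∀ s ∈ S, R < chordLen s.1 s.2)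
    (a b c d : ℝ) (hR : DL S a b + DL S c d ≤ R) : arcDist a b + arcDist c d ≤ R := by
  have key : ∀ p q, DL S p q ≤ R → arcDist p q = DL S p q := by
    induction S with
    | nil => intro p q _; rfl
    | cons s S ih =>
      intro p q hpq
      have ih' : ∀ p q, DL S p q ≤ R → arcDist p q = DL S p q := by
        intro p q hpq
        rcases S with _ | ⟨t, T⟩
        · rfl
        · obtain ⟨τ, hτ, hτ'⟩ : ∃ τ, R < τ ∧ ∀ s ∈ t :: T, τ ≤ chordLen s.1 s.2 := by
            clear ih hR hpq
            have h' : ∀ s ∈ t :: T, R < chordLen s.1 s.2 :=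
              fun s' hs' => h s' (List.mem_cons_of_mem _ hs')
            clear h
            generalize t :: T = U at h'
            induction U with
            | nil => exact ⟨R + 1, by linarith, by simp⟩
            | cons y Y ihY =>
              obtain ⟨τ, h3, h4⟩ := ihY (fun s' hs' => h' s' (List.mem_cons_of_mem _ hs'))
              refine ⟨min τ (chordLen y.1 y.2), lt_min h3 (h' y List.mem_cons_self), ?_⟩
              intro s' hs'
              rcases List.mem_cons.1 hs' with rfl | hs'
              · exact min_le_right _ _
              · exact (min_le_left _ _).trans (h4 s' hs')
          rcases min_arc_le (t :: T) τ hτ' p q with h5 | h5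
          · exact h5.symm
          · linarith
      have := h s List.mem_cons_self
      rcases DL_cases s S p q with h1 | h1 | h1
      · rw [h1] at hpq ⊢; exact ih' p q hpq
      · rw [h1] at hpq; linarith [DL_nonneg S p s.1, DL_nonneg S s.2 q]
      · rw [h1] at hpq; linarith [DL_nonneg S p s.2, DL_nonneg S s.1 q]
  rw [key a b (by linarith [DL_nonneg S c d]), key c d (by linarith [DL_nonneg S a b])]
  exact hR

lemma prov_S (t : ℝ × ℝ) {R θ : ℝ} (ht : arcDist t.1 t.2 = 2 * θ)
    (a b c d : ℝ) (hR : DL [t] a b + DL [t] c d ≤ R) :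
    arcDist a b + arcDist c d ≤ R + 4 * (θ - sin θ) := by
  have hc : chordLen t.1 t.2 = 2 * sin θ := by
    unfold chordLen; rw [ht]; congr 2; ring
  have h1 := arc_sub_le t a b
  have h2 := arc_sub_le t c d
  rw [ht, hc] at h1 h2
  linarith

lemma GG_ratio {S : List (ℝ × ℝ)} {x D ρ : ℝ} (hx0 : 0 ≤ x) (hx : x ≤ π) (hρ : 1 ≤ ρ)
    (hS : ∀ s ∈ S, arcDist s.1 s.2 ≤ ρ * chordLen s.1 s.2) (h : ρ * D < π - x) :
    GG S x D = ∅ := by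
  ext z
  simp only [GG, Set.mem_ofPred_eq, Set.mem_empty_iff_false, iff_false, not_le]
  have := arc_le_ratio S ρ hρ hS (z - (π - x) / 2) (z + (π - x) / 2)
  rw [GG_arc x z hx0 hx] at this
  by_contra hc
  push Not at hc
  nlinarith

/-! ### Taylor bounds -/

lemma le_of_deriv_le' (f g f' g' : ℝ → ℝ) (hf : ∀ x, HasDerivAt f (f' x) x)
    (hg : ∀ x, HasDerivAt g (g' x) x) (h0 : f 0 = g 0) (h : ∀ x, 0 ≤ x → f' x ≤ g' x)
    (x : ℝ) (hx : 0 ≤ x) : f x ≤ g x := by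
  have hd : ∀ y, HasDerivAt (fun y => g y - f y) (g' y - f' y) y := fun y => (hg y).sub (hf y)
  have hm : MonotoneOn (fun y => g y - f y) (Set.Ici 0) := by
    apply monotoneOn_of_deriv_nonneg (convex_Ici 0)
    · exact fun y _ => (hd y).continuousAt.continuousWithinAt
    · exact fun y _ => (hd y).differentiableAt.differentiableWithinAt
    · intro y hy
      rw [interior_Ici] at hy
      rw [(hd y).deriv]
      linarith [h y (le_of_lt hy)]
  have := hm (Set.mem_Ici.2 le_rfl) (Set.mem_Ici.2 hx) hx
  simp only at this
  linarith

lemma cosL2 (x : ℝ) (hx : 0 ≤ x) : 1 - x ^ 2 / 2 ≤ cos x := by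
  refine le_of_deriv_le' (fun x => 1 - x ^ 2 / 2) cos (fun x => -x) (fun x => -sin x) ?_
    (fun x => hasDerivAt_cos x) (by simp) ?_ x hx
  · intro x
    have := ((hasDerivAt_pow 2 x).div_const 2).const_sub 1
    exact this.congr_deriv (by push_cast; ring)
  · intro y hy; linarith [sin_le hy]

lemma sinL3 (x : ℝ) (hx : 0 ≤ x) : x - x ^ 3 / 6 ≤ sin x := by
  refine le_of_deriv_le' (fun x => x - x ^ 3 / 6) sin (fun x => 1 - x ^ 2 / 2) cos ?_
    (fun x => hasDerivAt_sin x) (by simp) ?_ x hx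
  · intro x
    have := (hasDerivAt_id x).sub ((hasDerivAt_pow 3 x).div_const 6)
    exact this.congr_deriv (by push_cast; ring)
  · exact cosL2

lemma cosU4 (x : ℝ) (hx : 0 ≤ x) : cos x ≤ 1 - x ^ 2 / 2 + x ^ 4 / 24 := by
  refine le_of_deriv_le' cos (fun x => 1 - x ^ 2 / 2 + x ^ 4 / 24) (fun x => -sin x)
    (fun x => -x + x ^ 3 / 6) (fun x => hasDerivAt_cos x) ?_ (by simp) ?_ x hx
  · intro x
    have := (((hasDerivAt_pow 2 x).div_const 2).const_sub 1).add ((hasDerivAt_pow 4 x).div_const 24)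
    exact this.congr_deriv (by push_cast; ring)
  · intro y hy; linarith [sinL3 y hy]

lemma sinU5 (x : ℝ) (hx : 0 ≤ x) : sin x ≤ x - x ^ 3 / 6 + x ^ 5 / 120 := by
  refine le_of_deriv_le' sin (fun x => x - x ^ 3 / 6 + x ^ 5 / 120) cos
    (fun x => 1 - x ^ 2 / 2 + x ^ 4 / 24) (fun x => hasDerivAt_sin x) ?_ (by simp) ?_ x hx
  · intro x
    have := ((hasDerivAt_id x).sub ((hasDerivAt_pow 3 x).div_const 6)).add
      ((hasDerivAt_pow 5 x).div_const 120)
    exact this.congr_deriv (by push_cast; ring)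
  · exact cosU4

lemma cosL6 (x : ℝ) (hx : 0 ≤ x) : 1 - x ^ 2 / 2 + x ^ 4 / 24 - x ^ 6 / 720 ≤ cos x := by
  refine le_of_deriv_le' (fun x => 1 - x ^ 2 / 2 + x ^ 4 / 24 - x ^ 6 / 720) cos
    (fun x => -x + x ^ 3 / 6 - x ^ 5 / 120) (fun x => -sin x) ?_
    (fun x => hasDerivAt_cos x) (by simp) ?_ x hx
  · intro x
    have := ((((hasDerivAt_pow 2 x).div_const 2).const_sub 1).add
      ((hasDerivAt_pow 4 x).div_const 24)).sub ((hasDerivAt_pow 6 x).div_const 720)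
    exact this.congr_deriv (by push_cast; ring)
  · intro y hy; linarith [sinU5 y hy]

lemma sinL7 (x : ℝ) (hx : 0 ≤ x) : x - x ^ 3 / 6 + x ^ 5 / 120 - x ^ 7 / 5040 ≤ sin x := by
  refine le_of_deriv_le' (fun x => x - x ^ 3 / 6 + x ^ 5 / 120 - x ^ 7 / 5040) sin
    (fun x => 1 - x ^ 2 / 2 + x ^ 4 / 24 - x ^ 6 / 720) cos ?_
    (fun x => hasDerivAt_sin x) (by simp) ?_ x hx
  · intro x
    have := (((hasDerivAt_id x).sub ((hasDerivAt_pow 3 x).div_const 6)).add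
      ((hasDerivAt_pow 5 x).div_const 120)).sub ((hasDerivAt_pow 7 x).div_const 5040)
    exact this.congr_deriv (by push_cast; ring)
  · exact cosL6

lemma cosU8 (x : ℝ) (hx : 0 ≤ x) :
    cos x ≤ 1 - x ^ 2 / 2 + x ^ 4 / 24 - x ^ 6 / 720 + x ^ 8 / 40320 := by
  refine le_of_deriv_le' cos (fun x => 1 - x ^ 2 / 2 + x ^ 4 / 24 - x ^ 6 / 720 + x ^ 8 / 40320)
    (fun x => -sin x)
    (fun x => -x + x ^ 3 / 6 - x ^ 5 / 120 + x ^ 7 / 5040) (fun x => hasDerivAt_cos x) ?_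
    (by simp) ?_ x hx
  · intro x
    have := (((((hasDerivAt_pow 2 x).div_const 2).const_sub 1).add
      ((hasDerivAt_pow 4 x).div_const 24)).sub ((hasDerivAt_pow 6 x).div_const 720)).add
      ((hasDerivAt_pow 8 x).div_const 40320)
    exact this.congr_deriv (by push_cast; ring)
  · intro y hy; linarith [sinL7 y hy]

lemma sinU9 (x : ℝ) (hx : 0 ≤ x) :
    sin x ≤ x - x ^ 3 / 6 + x ^ 5 / 120 - x ^ 7 / 5040 + x ^ 9 / 362880 := by
  refine le_of_deriv_le' sin
    (fun x => x - x ^ 3 / 6 + x ^ 5 / 120 - x ^ 7 / 5040 + x ^ 9 / 362880) cos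
    (fun x => 1 - x ^ 2 / 2 + x ^ 4 / 24 - x ^ 6 / 720 + x ^ 8 / 40320)
    (fun x => hasDerivAt_sin x) ?_ (by simp) ?_ x hx
  · intro x
    have := ((((hasDerivAt_id x).sub ((hasDerivAt_pow 3 x).div_const 6)).add
      ((hasDerivAt_pow 5 x).div_const 120)).sub ((hasDerivAt_pow 7 x).div_const 5040)).add
      ((hasDerivAt_pow 9 x).div_const 362880)
    exact this.congr_deriv (by push_cast; ring)
  · exact cosU8

/-! ### Monotonicity helpers -/

/-- sine is 1-Lipschitz (one sided). -/
lemma sin_sub_le {a b : ℝ} (h : a ≤ b) : sin b - sin a ≤ b - a := by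
  have hm : Monotone fun y : ℝ => y - sin y := by
    apply monotone_of_deriv_nonneg
    · exact differentiable_id.sub differentiable_sin
    · intro y
      have hd : HasDerivAt (fun y : ℝ => y - sin y) (1 - cos y) y :=
        (hasDerivAt_id y).sub (hasDerivAt_sin y)
      rw [hd.deriv]
      linarith [cos_le_one y]
  have := hm h
  simp only at this
  linarith

lemma sin_mono {a b : ℝ} (h0 : -(π / 2) ≤ a) (h : a ≤ b) (h1 : b ≤ π / 2) : sin a ≤ sin b :=
  sin_le_sin_of_le_of_le_pi_div_two h0 h1 h

lemma cos_anti {a b : ℝ} (h0 : 0 ≤ a) (h : a ≤ b) (h1 : b ≤ π) : cos b ≤ cos a :=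
  cos_le_cos_of_nonneg_of_le_pi h0 h1 h

/-- `θ ≤ (t / sin t) sin θ` for `θ ≤ t`. -/
lemma ratio_sin {θ t : ℝ} (h0 : 0 ≤ θ) (h : θ ≤ t) (ht0 : 0 < t) (ht : t ≤ π) :
    θ * sin t ≤ t * sin θ := by
  have hc := (strictConcaveOn_sin_Icc.concaveOn).2 (Set.mem_Icc.2 ⟨le_rfl, pi_pos.le⟩)
    (Set.mem_Icc.2 ⟨ht0.le, ht⟩) (show 0 ≤ 1 - θ / t by rw [sub_nonneg, div_le_one ht0]; exact h)
    (show 0 ≤ θ / t by positivity) (by ring)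
  simp only [smul_eq_mul, sin_zero, mul_zero, zero_add] at hc
  rw [div_mul_cancel₀ _ ht0.ne', div_mul_eq_mul_div, div_le_iff₀ ht0] at hc
  linarith

lemma concave_ends {x t T θ v : ℝ} (hx : 0 ≤ x) (ht : x / 2 ≤ t) (h1 : t ≤ θ) (h2 : θ ≤ T)
    (hT : T ≤ π / 2) (e1 : v < sin t + cos (t - x / 2)) (e2 : v < sin T + cos (T - x / 2)) :
    v < sin θ + cos (θ - x / 2) := by
  have hp := pi_pos
  have hc1 : ConcaveOn ℝ (Set.Icc t T) sin :=
    (strictConcaveOn_sin_Icc.concaveOn).subset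
      (fun y hy => ⟨by linarith [hy.1], by linarith [hy.2]⟩) (convex_Icc _ _)
  have hc2 : ConcaveOn ℝ (Set.Icc t T) (fun y => cos (y - x / 2)) := by
    refine ⟨convex_Icc _ _, ?_⟩
    intro a ha b hb p q hp0 hq0 hpq
    have := (strictConcaveOn_cos_Icc.concaveOn).2
      (show a - x / 2 ∈ Set.Icc (-(π / 2)) (π / 2) from ⟨by linarith [ha.1], by linarith [ha.2]⟩)
      (show b - x / 2 ∈ Set.Icc (-(π / 2)) (π / 2) from ⟨by linarith [hb.1], by linarith [hb.2]⟩) hp0 hq0 hpq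
    refine this.trans (le_of_eq ?_)
    congr 1
    simp only [smul_eq_mul]
    have : q = 1 - p := by linarith
    rw [this]; ring
  have hc := hc1.add hc2
  have hle := hc.min_le_of_mem_Icc (x := t) (y := T) (z := θ)
    ⟨le_rfl, h1.trans h2⟩ ⟨h1.trans h2, le_rfl⟩ ⟨h1, h2⟩
  simp only [Pi.add_apply] at hle
  exact lt_of_lt_of_le (lt_min e1 e2) hle

/-! ### Steps driven by Euclidean bounds -/

/-- Half of the arc spanned by a shortcut. -/
noncomputable def hArc (s : ℝ × ℝ) : ℝ := arcDist s.1 s.2 / 2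

lemma hArc_eq (s : ℝ × ℝ) : arcDist s.1 s.2 = 2 * hArc s := by unfold hArc; ring

lemma hArc_nonneg (s : ℝ × ℝ) : 0 ≤ hArc s := by unfold hArc; linarith [arc_nonneg s.1 s.2]

lemma hArc_le (s : ℝ × ℝ) : hArc s ≤ π / 2 := by unfold hArc; linarith [arc_le_pi s.1 s.2]

lemma chord_hArc (s : ℝ × ℝ) : chordLen s.1 s.2 = 2 * sin (hArc s) := rfl

lemma sin_hArc_nonneg (s : ℝ × ℝ) : 0 ≤ sin (hArc s) :=
  sin_nonneg_of_nonneg_of_le_pi (hArc_nonneg s) (by linarith [hArc_le s, pi_pos])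

/-- One-sided step with the Euclidean provider. -/
lemma step1E {s : ℝ × ℝ} {S : List (ℝ × ℝ)} {x D t T c η : ℝ} (hx0 : 0 < x) (hx : x ≤ π)
    (hxt : x / 2 ≤ t) (hT : T ≤ π / 2) (h1 : t ≤ hArc s) (h2 : hArc s ≤ T)
    (hc0 : 0 ≤ c) (hc : c < π) (hDc : D / 2 - sin t ≤ sin (c / 2))
    (e1 : D / 2 < sin t + cos (t - x / 2)) (e2 : D / 2 < sin T + cos (T - x / 2))
    (hη : 0 ≤ η) (h : Cov (GG S x D) η) : Cov (GG (s :: S) x D) (η + c) := by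
  have hp := pi_pos
  set θ := hArc s with hθ
  have hθ2 : θ ≤ π / 2 := hArc_le s
  have hsin : sin t ≤ sin θ := sin_mono (by linarith) h1 hθ2
  have hsc : 0 ≤ sin (c / 2) := sin_nonneg_of_nonneg_of_le_pi (by linarith) (by linarith)
  set w := max (D / 2 - sin θ) 0 with hw
  have hw0 : 0 ≤ w := le_max_right _ _
  have hwc : w ≤ sin (c / 2) := max_le (by linarith) hsc
  have hw1 : w ≤ 1 := hwc.trans (sin_le_one _)
  set ζ := arcsin w with hζ
  have hsζ : sin ζ = w := sin_arcsin (by linarith) hw1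
  have hζ0 : 0 ≤ ζ := arcsin_nonneg.2 hw0
  have hζc : ζ ≤ c / 2 := by
    rw [hζ, arcsin_le_iff_le_sin ⟨by linarith, hw1⟩ ⟨by linarith, by linarith⟩]
    exact hwc
  have hζx : ζ < (π + x) / 2 - θ := by
    rw [hζ, arcsin_lt_iff_lt_sin ⟨by linarith, hw1⟩ ⟨by linarith, by linarith⟩]
    have e : (π + x) / 2 - θ = π / 2 - (θ - x / 2) := by ring
    rw [e, sin_pi_div_two_sub]
    have := concave_ends hx0.le hxt h1 h2 hT e1 e2
    refine max_lt (by linarith) ?_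
    apply cos_pos_of_mem_Ioo
    constructor <;> linarith
  refine cov_mono (GG_step1 (hArc_eq s) hx0.le hx (ρ := 2 * ζ) (by linarith) (by linarith)
    (prov_E S hζ0 (by linarith) ?_) hη (by linarith) (by linarith) h) le_rfl (by linarith)
  rw [hsζ]
  have := le_max_left (D / 2 - sin θ) 0
  linarith

/-- Two-sided step with the Euclidean provider. -/
lemma step2E {s : ℝ × ℝ} {S : List (ℝ × ℝ)} {x D T c η : ℝ} (hx0 : 0 ≤ x) (hx : x ≤ π)
    (hxT : x / 2 ≤ T) (h2 : T ≤ hArc s)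
    (hc0 : 0 ≤ c) (hc : c < 2 * π) (hDc : D / 2 - sin T ≤ sin (c / 4))
    (hη : 0 ≤ η) (h : Cov (GG S x D) η) : Cov (GG (s :: S) x D) (η + c) := by
  have hp := pi_pos
  have hsin : sin T ≤ sin (hArc s) := sin_mono (by linarith) h2 (hArc_le s)
  refine cov_mono (GG_step2 (hArc_eq s) hx0 hx (ρ := 2 * (c / 4)) (by linarith) (by linarith)
    (prov_E S (by linarith) (by linarith) (by linarith)) hη (by linarith) h) le_rfl (by linarith)

lemma stepE {x D t T c : ℝ} (hx0 : 0 < x) (hx : x ≤ π)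
    (hxt : x / 2 ≤ t) (htT : t ≤ T) (hT : T ≤ π / 2)
    (hc0 : 0 ≤ c) (hc : c < π) (hDc : D / 2 - sin t ≤ sin (c / 2))
    (e1 : D / 2 < sin t + cos (t - x / 2)) (e2 : D / 2 < sin T + cos (T - x / 2))
    (hDc2 : D / 2 - sin T ≤ sin (c / 4))
    (s : ℝ × ℝ) (S : List (ℝ × ℝ)) (η : ℝ) (h1 : t ≤ hArc s) 
    (hη : 0 ≤ η) (h : Cov (GG S x D) η) : Cov (GG (s :: S) x D) (η + c) := by
  rcases le_total (hArc s) T with h2 | h2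
  · exact step1E hx0 hx hxt hT h1 h2 hc0 hc hDc e1 e2 hη h
  · exact step2E hx0.le hx (hxt.trans htT) h2 hc0 (by linarith) hDc2 hη h

lemma ratio_empty {S : List (ℝ × ℝ)} {x D t : ℝ} (hx0 : 0 ≤ x) (hx : x ≤ π) (ht0 : 0 < t)
    (ht : t < π) (hS : ∀ s ∈ S, hArc s ≤ t) (h : t * D < (π - x) * sin t) : GG S x D = ∅ := by
  have hs : 0 < sin t := sin_pos_of_pos_of_lt_pi ht0 ht
  apply GG_ratio (ρ := t / sin t) hx0 hx
  · rw [le_div_iff₀ hs]; linarith [sin_le ht0.le]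
  · intro s hs'
    rw [hArc_eq, chord_hArc, div_mul_eq_mul_div, le_div_iff₀ hs]
    have := ratio_sin (hArc_nonneg s) (hS s hs') ht0 ht.le
    linarith
  · rw [div_mul_eq_mul_div, div_lt_iff₀ hs]; exact h

/-- Lists of shortcuts sorted by decreasing arc. -/
def Desc (l : List (ℝ × ℝ)) : Prop := l.Pairwise fun a b => hArc b ≤ hArc a

lemma case1_gen {x D t c : ℝ} (hc0 : 0 ≤ c)
    (hE : ∀ S : List (ℝ × ℝ), (∀ s ∈ S, hArc s ≤ t) → GG S x D = ∅)
    (hstep : ∀ (s : ℝ × ℝ) (S : List (ℝ × ℝ)) (η : ℝ), t ≤ hArc s → 0 ≤ η →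
      Cov (GG S x D) η → Cov (GG (s :: S) x D) (η + c))
    (l : List (ℝ × ℝ)) (hl : Desc l) (he : ∃ s ∈ l, hArc s ≤ t) :
    Cov (GG l x D) (((l.length : ℝ) - 1) * c) := by
  induction l with
  | nil => simp at he
  | cons s S ih =>
    rw [Desc, List.pairwise_cons] at hl
    rcases le_total (hArc s) t with h | h
    · rw [hE (s :: S)]
      · refine cov_mono cov_empty le_rfl ?_
        push_cast [List.length_cons]
        have : (0 : ℝ) ≤ S.length := Nat.cast_nonneg _
        nlinarith
      · intro s' hs'
        rcases List.mem_cons.1 hs' with rfl | h'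
        · exact h
        · exact (hl.1 s' h').trans h
    · rcases S with _ | ⟨u, U⟩
      · obtain ⟨s', hs', h'⟩ := he
        rw [List.mem_singleton] at hs'
        subst hs'
        rw [hE [s']]
        · refine cov_mono cov_empty le_rfl ?_
          simp
        · intro y hy
          rw [List.mem_singleton] at hy
          rw [hy]; exact h'
      · have hex : ∃ s' ∈ u :: U, hArc s' ≤ t := by
          obtain ⟨s', hs', h'⟩ := he
          rcases List.mem_cons.1 hs' with rfl | h''
          · exact ⟨u, List.mem_cons_self, (hl.1 u List.mem_cons_self).trans h'⟩
          · exact ⟨s', h'', h'⟩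
        have := hstep s (u :: U) _ h (by
          push_cast [List.length_cons]
          have : (0 : ℝ) ≤ U.length := Nat.cast_nonneg _
          nlinarith) (ih hl.2 hex)
        refine cov_mono this le_rfl ?_
        push_cast [List.length_cons]
        linarith

/-- All shortcuts long: each one covers at most `2P - ε`. -/
lemma case2_gen {P θs D t T ε : ℝ} (hP0 : 0 < P) (hθ0 : 0 < θs) (hθ1 : θs ≤ π / 2)
    (hθ : θs + sin θs = π - P) (hε : 0 < ε) (hD : D = π - (θs - sin θs) - ε) (hD2 : 2 < D)
    (hδ : 0 < θs - sin θs) (hP2 : 2 * P ≤ π)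
    (hxt : (θs - sin θs) / 2 ≤ t) (ht1 : P < 2 * sin t) (hT : T ≤ π / 2)
    (ht2 : (D + ε) / 2 - sin t ≤ sin P) (hT2 : (D + ε) / 2 - sin t ≤ sin T) (htT : 0 ≤ T)
    (e1 : D / 2 < sin t + cos (t - (θs - sin θs) / 2))
    (e2 : D / 2 < sin T + cos (T - (θs - sin θs) / 2))
    (l : List (ℝ × ℝ)) (hl : ∀ s ∈ l, t ≤ hArc s) :
    Cov (GG l (θs - sin θs) D) (l.length * (2 * P - ε)) := by
  have hp := pi_pos
  set x := θs - sin θs with hx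
  have hss : 0 ≤ sin θs := sin_nonneg_of_nonneg_of_le_pi hθ0.le (by linarith)
  have hs1 := sin_le_one θs
  have hxpi : x ≤ π := by linarith
  have hεP : ε < P := by linarith
  have ht0 : 0 ≤ t := by linarith
  induction l with
  | nil =>
    rw [GG_nil hδ.le hxpi (by linarith)]
    exact cov_mono cov_empty le_rfl (by simp)
  | cons s S ih =>
    have ih' := ih (fun s' h => hl s' (List.mem_cons_of_mem _ h))
    have hη : 0 ≤ S.length * (2 * P - ε) := by
      have : (0 : ℝ) ≤ S.length := Nat.cast_nonneg _
      apply mul_nonneg this; linarith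
    have hst := hl s List.mem_cons_self
    have hs2 := hArc_le s
    have hsinle := sin_le_one (hArc s)
    have hsin : ∀ s' ∈ s :: S, sin t ≤ sin (hArc s') := fun s' h =>
      sin_mono (by linarith) (hl s' h) (hArc_le s')
    have hsin' := hsin s List.mem_cons_self
    have hPsin : sin P ≤ P := sin_le hP0.le
    suffices h : Cov (GG (s :: S) x D) (S.length * (2 * P - ε) + (2 * P - ε)) by
      refine cov_mono h le_rfl ?_
      push_cast [List.length_cons]; linarith
    rcases le_total θs (hArc s) with h | h
    · have h1 : sin θs ≤ sin (hArc s) := sin_mono (by linarith) h hs2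
      refine cov_mono (GG_step2 (hArc_eq s) hδ.le hxpi (ρ := D - 2 * sin (hArc s)) (by linarith)
        (by linarith) (prov_X S ?_) hη (by linarith) ih') le_rfl (by linarith)
      intro s' hs'
      rw [chord_hArc]
      linarith [hsin s' (List.mem_cons_of_mem _ hs')]
    · have hδs : hArc s - sin (hArc s) ≤ x := by linarith [sin_sub_le h]
      rcases lt_or_ge (D - 2 * sin t) (2 * sin (hArc s)) with h1 | h1
      · refine cov_mono (GG_step1 (hArc_eq s) hδ.le hxpi (ρ := D - 2 * sin (hArc s)) (by linarith)
          (by linarith) (prov_X S ?_) hη (by linarith) (by linarith) ih') le_rfl (by linarith)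
        intro s' hs'
        rw [chord_hArc]
        linarith [hsin s' (List.mem_cons_of_mem _ hs')]
      · have hsT : hArc s ≤ T := by
          by_contra hc
          push Not at hc
          have := sin_lt_sin_of_lt_of_le_pi_div_two (by linarith) hs2 hc
          linarith
        refine step1E hδ hxpi hxt hT hst hsT (by linarith) (by linarith) ?_ e1 e2 hη ih'
        have := sin_sub_le (a := P - ε / 2) (b := P) (by linarith)
        have e : (2 * P - ε) / 2 = P - ε / 2 := by ring
        rw [e]
        linarith

/-! ### The lower bound for three, four and five shortcuts -/

lemma no_cov {l : List (ℝ × ℝ)} {x D η : ℝ} (h : ∀ p q, DL l p q ≤ D)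
    (hc : Cov (GG l x D) η) : 2 * π ≤ η :=
  cov_univ (cov_mono hc (fun _ _ => h _ _) le_rfl)

lemma theta_lb {θ c v : ℝ} (h0 : 0 ≤ θ) (hc : c ≤ π / 2) (h : θ + sin θ = v)
    (hv : c + sin c ≤ v) : c ≤ θ := by
  by_contra hcon
  push Not at hcon
  have := sin_lt_sin_of_lt_of_le_pi_div_two (by linarith [pi_pos]) hc hcon
  linarith

lemma delta_ub {θ : ℝ} (h : θ ≤ π / 2) : θ - sin θ ≤ π / 2 - 1 := by
  have := sin_sub_le h
  rw [sin_pi_div_two] at this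
  linarith

lemma low5 {θs D ε : ℝ} (hθ0 : 0 ≤ θs) (hθ1 : θs ≤ π / 2) (hθ : θs + sin θs = π - π / 5)
    (hε : 0 < ε) (hε1 : ε < 1 / 100) (hD : D = π - (θs - sin θs) - ε)
    (l : List (ℝ × ℝ)) (hlen : l.length = 5) (hl : Desc l) (h : ∀ p q, DL l p q ≤ D) : False := by
  have p1 := pi_gt_d6
  have p2 := pi_lt_d6
  have hlb : 1514 / 1000 ≤ θs := by
    refine theta_lb hθ0 (by linarith) hθ ?_
    have := sinU9 (1514 / 1000) (by norm_num)
    norm_num at this ⊢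
    linarith
  have hDub : D + ε ≤ 2.6269 := by linarith
  have hxlb : 0.514 ≤ θs - sin θs := by linarith
  have hxub := delta_ub hθ1
  have st := sinL7 (82 / 100) (by norm_num)
  have sT := sinL7 (83 / 100) (by norm_num)
  have sP := sinL7 (628 / 1000) (by norm_num)
  have ct := cosL6 (57 / 100) (by norm_num)
  have sA := sinL7 (12 / 10) (by norm_num)
  have cA := cosL6 (115 / 100) (by norm_num)
  have c77 := cosL6 (77 / 100) (by norm_num)
  have sc2 := sinL7 (785 / 1000) (by norm_num)
  have sc4 := sinL7 (3925 / 10000) (by norm_num)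
  norm_num at st sT sP ct sA cA c77 sc2 sc4
  by_cases hcase : ∀ s ∈ l, (82 / 100 : ℝ) ≤ hArc s
  · have hP := sin_mono (a := 628 / 1000) (b := π / 5) (by linarith) (by linarith) (by linarith)
    norm_num at hP
    have hc1 := cos_anti (a := 82 / 100 - (θs - sin θs) / 2) (b := 57 / 100) (by linarith)
      (by linarith) (by linarith)
    have hc2 := cos_anti (a := 83 / 100 - (θs - sin θs) / 2) (b := 77 / 100) (by linarith)
      (by linarith) (by linarith)
    norm_num at hc1 hc2
    have hcov := case2_gen (P := π / 5) (θs := θs) (D := D) (t := 82 / 100) (T := 83 / 100)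
      (ε := ε) (by linarith) (by linarith) hθ1 hθ hε hD (by linarith) (by linarith) (by linarith)
      (by linarith) (by norm_num; linarith) (by linarith) (by norm_num; linarith)
      (by norm_num; linarith) (by norm_num) (by norm_num; linarith) (by norm_num; linarith) l hcase
    have := no_cov h hcov
    rw [hlen] at this
    push_cast at this
    linarith
  · push Not at hcase
    obtain ⟨s, hs, hs'⟩ := hcase
    have hcov := case1_gen (x := 1 / 10) (D := D) (t := 82 / 100) (c := 157 / 100) (by norm_num)
      (fun S hS => ratio_empty (by norm_num) (by linarith) (by norm_num) (by linarith) hS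
        (by norm_num; nlinarith))
      (stepE (T := 12 / 10) (by norm_num) (by linarith) (by norm_num) (by norm_num) (by linarith)
        (by norm_num) (by linarith) (by norm_num; linarith) 
        (by norm_num; linarith) (by norm_num; linarith) (by norm_num; linarith))
      l hl ⟨s, hs, hs'.le⟩
    have := no_cov h hcov
    rw [hlen] at this
    norm_num at this
    linarith

lemma low4 {θs D ε : ℝ} (hθ0 : 0 ≤ θs) (hθ1 : θs ≤ π / 2) (hθ : θs + sin θs = π - π / 4)
    (hε : 0 < ε) (hε1 : ε < 1 / 100) (hD : D = π - (θs - sin θs) - ε)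
    (l : List (ℝ × ℝ)) (hlen : l.length = 4) (hl : Desc l) (h : ∀ p q, DL l p q ≤ D) : False := by
  have p1 := pi_gt_d6
  have p2 := pi_lt_d6
  have hlb : 1375 / 1000 ≤ θs := by
    refine theta_lb hθ0 (by linarith) hθ ?_
    have := sinU9 (1375 / 1000) (by norm_num)
    norm_num at this ⊢
    linarith
  have hDub : D + ε ≤ 2.7479 := by linarith
  have hxlb : 0.393 ≤ θs - sin θs := by linarith
  have hxub := delta_ub hθ1
  have st := sinL7 (75 / 100) (by norm_num)
  have sT := sinL7 (77 / 100) (by norm_num)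
  have sP := sinL7 (785 / 1000) (by norm_num)
  have ct := cosL6 (56 / 100) (by norm_num)
  have cT := cosL6 (58 / 100) (by norm_num)
  have sA := sinL7 (1066 / 1000) (by norm_num)
  have cA := cosL6 (1016 / 1000) (by norm_num)
  have c70 := cosL6 (7 / 10) (by norm_num)
  have sc2 := sinL7 (1045 / 1000) (by norm_num)
  have sc4 := sinL7 (5225 / 10000) (by norm_num)
  norm_num at st sT sP ct cT sA cA c70 sc2 sc4
  by_cases hcase : ∀ s ∈ l, (75 / 100 : ℝ) ≤ hArc s
  · have hP := sin_mono (a := 785 / 1000) (b := π / 4) (by linarith) (by linarith) (by linarith)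
    norm_num at hP
    have hc1 := cos_anti (a := 75 / 100 - (θs - sin θs) / 2) (b := 56 / 100) (by linarith)
      (by linarith) (by linarith)
    have hc2 := cos_anti (a := 77 / 100 - (θs - sin θs) / 2) (b := 58 / 100) (by linarith)
      (by linarith) (by linarith)
    norm_num at hc1 hc2
    have hcov := case2_gen (P := π / 4) (θs := θs) (D := D) (t := 75 / 100) (T := 77 / 100)
      (ε := ε) (by linarith) (by linarith) hθ1 hθ hε hD (by linarith) (by linarith) (by linarith)
      (by linarith) (by norm_num; linarith) (by linarith) (by norm_num; linarith)
      (by norm_num; linarith) (by norm_num) (by norm_num; linarith) (by norm_num; linarith) l hcase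
    have := no_cov h hcov
    rw [hlen] at this
    push_cast at this
    linarith
  · push Not at hcase
    obtain ⟨s, hs, hs'⟩ := hcase
    have hcov := case1_gen (x := 1 / 10) (D := D) (t := 75 / 100) (c := 209 / 100) (by norm_num)
      (fun S hS => ratio_empty (by norm_num) (by linarith) (by norm_num) (by linarith) hS
        (by norm_num; nlinarith))
      (stepE (T := 1066 / 1000) (by norm_num) (by linarith) (by norm_num) (by norm_num)
        (by linarith) (by norm_num) (by linarith) (by norm_num; linarith) 
        (by norm_num; linarith) (by norm_num; linarith) (by norm_num; linarith))
      l hl ⟨s, hs, hs'.le⟩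
    have := no_cov h hcov
    rw [hlen] at this
    norm_num at this
    linarith

lemma low3 {θs D ε : ℝ} (hθ0 : 0 ≤ θs) (hθ1 : θs ≤ π / 2) (hθ : θs + sin θs = π - π / 3)
    (hε : 0 < ε) (hε1 : ε < 1 / 100) (hD : D = π - (θs - sin θs) - ε)
    (l : List (ℝ × ℝ)) (hlen : l.length = 3) (hl : Desc l) (h : ∀ p q, DL l p q ≤ D) : False := by
  have p1 := pi_gt_d6
  have p2 := pi_lt_d6
  have hlb : 11725 / 10000 ≤ θs := by
    refine theta_lb hθ0 (by linarith) hθ ?_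
    have := sinU9 (11725 / 10000) (by norm_num)
    norm_num at this ⊢
    linarith
  have hDub : D + ε ≤ 2.891 := by linarith
  have hxlb : 0.25 ≤ θs - sin θs := by linarith
  have hxub := delta_ub hθ1
  have st := sinL7 (63 / 100) (by norm_num)
  have sT := sinL7 (103 / 100) (by norm_num)
  have sP := sinL7 (1047 / 1000) (by norm_num)
  have ct := cosL6 (51 / 100) (by norm_num)
  have cT := cosL6 (91 / 100) (by norm_num)
  have s695 := sinL7 (695 / 1000) (by norm_num)
  have sA := sinL7 (832 / 1000) (by norm_num)
  have cA := cosL6 (757 / 1000) (by norm_num)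
  have c62 := cosL6 (62 / 100) (by norm_num)
  have sc2 := sinL7 (157 / 100) (by norm_num)
  have sc3 := sinL7 (155 / 100) (by norm_num)
  have sc4 := sinL7 (785 / 1000) (by norm_num)
  norm_num at st sT sP ct cT s695 sA cA c62 sc2 sc3 sc4
  by_cases hcase : ∀ s ∈ l, (63 / 100 : ℝ) ≤ hArc s
  · have hP := sin_mono (a := 1047 / 1000) (b := π / 3) (by linarith) (by linarith) (by linarith)
    norm_num at hP
    have hc1 := cos_anti (a := 63 / 100 - (θs - sin θs) / 2) (b := 51 / 100) (by linarith)
      (by linarith) (by linarith)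
    have hc2 := cos_anti (a := 103 / 100 - (θs - sin θs) / 2) (b := 91 / 100) (by linarith)
      (by linarith) (by linarith)
    norm_num at hc1 hc2
    have hcov := case2_gen (P := π / 3) (θs := θs) (D := D) (t := 63 / 100) (T := 103 / 100)
      (ε := ε) (by linarith) (by linarith) hθ1 hθ hε hD (by linarith) (by linarith) (by linarith)
      (by linarith) (by norm_num; linarith) (by linarith) (by norm_num; linarith)
      (by norm_num; linarith) (by norm_num) (by norm_num; linarith) (by norm_num; linarith) l hcase
    have := no_cov h hcov
    rw [hlen] at this
    push_cast at this
    linarith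
  · obtain ⟨s1, s2, s3, rfl⟩ := List.length_eq_three.1 hlen
    have h12 : hArc s2 ≤ hArc s1 := by
      rw [Desc, List.pairwise_cons] at hl; exact hl.1 s2 (by simp)
    have h23 : hArc s3 ≤ hArc s2 := by
      rw [Desc, List.pairwise_cons, List.pairwise_cons] at hl; exact hl.2.1 s3 (by simp)
    have h3 : hArc s3 ≤ 63 / 100 := by
      by_contra hc
      push Not at hc
      apply hcase
      intro s hs
      simp only [List.mem_cons, List.not_mem_nil, or_false] at hs
      rcases hs with rfl | rfl | rfl <;> linarith
    rcases le_total (hArc s2) (695 / 1000) with h2 | h2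
    · -- the two shorter shortcuts are useless
      have hemp : ∀ S : List (ℝ × ℝ), (∀ s ∈ S, hArc s ≤ 695 / 1000) → GG S 0 D = ∅ :=
        fun S hS => ratio_empty le_rfl (by linarith) (by norm_num) (by linarith) hS
          (by norm_num; nlinarith)
      rcases le_total (hArc s1) (695 / 1000) with h1 | h1
      · have h0 : Cov (GG [s1, s2, s3] 0 D) 0 := by
          rw [hemp]
          · exact cov_empty
          · intro s hs
            simp only [List.mem_cons, List.not_mem_nil, or_false] at hs
            rcases hs with rfl | rfl | rfl <;> linarith
        linarith [no_cov h h0]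
      · have h0 : Cov (GG [s2, s3] 0 D) 0 := by
          rw [hemp]
          · exact cov_empty
          · intro s hs
            simp only [List.mem_cons, List.not_mem_nil, or_false] at hs
            rcases hs with rfl | rfl <;> linarith
        have := step2E (s := s1) (c := 62 / 10) (T := 695 / 1000) le_rfl (by linarith)
          (by norm_num) h1 (by norm_num) (by linarith) (by norm_num; linarith) le_rfl h0
        linarith [no_cov h this]
    · have h0 : Cov (GG [s3] (15 / 100) D) 0 := by
        have hd := sin_sub_le h3
        have hs0 := sin_hArc_nonneg s3
        have hs1 := hArc_nonneg s3
        norm_num at hd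
        refine GG_step0 (hArc_eq s3) (ρ := D - 2 * sin (hArc s3)) (by norm_num) (by linarith)
          (by linarith) (by linarith) (prov_X [] (by simp)) (by linarith) ?_
        rw [GG_nil (by norm_num) (by linarith) (by linarith)]
        exact cov_empty
      have hst : ∀ (s : ℝ × ℝ) (S : List (ℝ × ℝ)) (η : ℝ), 695 / 1000 ≤ hArc s → 0 ≤ η →
          Cov (GG S (15 / 100) D) η → Cov (GG (s :: S) (15 / 100) D) (η + 314 / 100) :=
        stepE (T := 832 / 1000) (by norm_num) (by linarith) (by norm_num) (by norm_num)
          (by linarith) (by norm_num) (by linarith) (by norm_num; linarith)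
          (by norm_num; linarith) (by norm_num; linarith) (by norm_num; linarith)
      have := hst s1 _ _ (by linarith) (by norm_num) (hst s2 _ _ h2 le_rfl h0)
      linarith [no_cov h this]

/-! ### The lower bound for two shortcuts -/

lemma mid_exists (s : ℝ × ℝ) : ∃ m, arcDist m s.1 = hArc s ∧ arcDist m s.2 = hArc s := by
  have h2 := hArc_eq s
  have h0 := hArc_nonneg s
  obtain ⟨m, hm⟩ := rep_shortcut s.1 s.2 (hArc s) h2
  have ht := arc_tri s.1 m s.2
  rw [arc_comm s.1 m] at ht
  have key : arcDist m s.1 ≤ hArc s ∧ arcDist m s.2 ≤ hArc s := by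
    rcases hm with ⟨i, j, e1, e2⟩ | ⟨i, j, e1, e2⟩
    · constructor
      · refine (arc_le m s.1 i).trans ?_
        have : m - s.1 + 2 * π * i = hArc s := by rw [e1]; ring
        rw [this, abs_of_nonneg h0]
      · refine (arc_le m s.2 j).trans ?_
        have : m - s.2 + 2 * π * j = -hArc s := by rw [e2]; ring
        rw [this, abs_neg, abs_of_nonneg h0]
    · constructor
      · refine (arc_le m s.1 i).trans ?_
        have : m - s.1 + 2 * π * i = -hArc s := by rw [e1]; ring
        rw [this, abs_neg, abs_of_nonneg h0]
      · refine (arc_le m s.2 j).trans ?_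
        have : m - s.2 + 2 * π * j = hArc s := by rw [e2]; ring
        rw [this, abs_of_nonneg h0]
  exact ⟨m, by linarith [key.1, key.2], by linarith [key.1, key.2]⟩

lemma near_bounds {p q m e θ : ℝ} (hpq : arcDist p q = π) (hm : arcDist m e = θ)
    (hp : arcDist p m ≤ π / 4) : θ - π / 4 ≤ arcDist p e ∧ π - θ - π / 4 ≤ arcDist q e := by
  have h1 := arc_tri m p e
  have h2 := arc_tri p m e
  have h3 := arc_tri p e q
  rw [arc_comm m p] at h1
  rw [arc_comm e q] at h3
  constructor <;> linarith

lemma DL_two_bound (s t : ℝ × ℝ) (p q D P1 Q1 P2 Q2 : ℝ) (h0 : D ≤ arcDist p q)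
    (a1 : P1 ≤ arcDist p s.1) (a2 : P1 ≤ arcDist p s.2)
    (a3 : Q1 ≤ arcDist q s.1) (a4 : Q1 ≤ arcDist q s.2)
    (b1 : P2 ≤ arcDist p t.1) (b2 : P2 ≤ arcDist p t.2)
    (b3 : Q2 ≤ arcDist q t.1) (b4 : Q2 ≤ arcDist q t.2)
    (c1 : D ≤ P1 + chordLen s.1 s.2 + Q1) (c2 : D ≤ P2 + chordLen t.1 t.2 + Q2)
    (c3 : D ≤ P1 + chordLen s.1 s.2 + chordLen t.1 t.2 + Q2)
    (c4 : D ≤ P2 + chordLen s.1 s.2 + chordLen t.1 t.2 + Q1)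
    (c5 : D ≤ chordLen s.1 s.2 + 2 * chordLen t.1 t.2) : D ≤ DL [s, t] p q := by
  rw [arc_comm] at a3 a4 b3 b4
  have n1 := arc_nonneg p t.1
  have n2 := arc_nonneg p t.2
  have n3 := arc_nonneg t.1 q
  have n4 := arc_nonneg t.2 q
  have n5 := arc_nonneg t.1 s.1
  have n6 := arc_nonneg t.1 s.2
  have n7 := arc_nonneg t.2 s.1
  have n8 := arc_nonneg t.2 s.2
  have m5 := arc_nonneg s.1 t.1
  have m6 := arc_nonneg s.2 t.1
  have m7 := arc_nonneg s.1 t.2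
  have m8 := arc_nonneg s.2 t.2
  rcases DL_cases s [t] p q with h | h | h <;> rw [h]
  · rcases DL_cases t [] p q with h' | h' | h' <;> rw [h'] <;> simp only [DL] <;> linarith
  · rcases DL_cases t [] p s.1 with h' | h' | h' <;> rw [h'] <;>
      rcases DL_cases t [] s.2 q with h'' | h'' | h'' <;> rw [h''] <;> simp only [DL] <;> linarith
  · rcases DL_cases t [] p s.2 with h' | h' | h' <;> rw [h'] <;>
      rcases DL_cases t [] s.1 q with h'' | h'' | h'' <;> rw [h''] <;> simp only [DL] <;> linarith

lemma half_le_two_sin {θ : ℝ} (h0 : 0 ≤ θ) (h1 : θ ≤ π / 2) : θ ≤ 2 * sin θ := by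
  have h := mul_le_sin h0 h1
  have hp := pi_lt_four
  have : 1 / 2 ≤ 2 / π := by
    rw [div_le_div_iff₀ (by norm_num) pi_pos]; linarith
  nlinarith

lemma centre_exists (m₁ m₂ : ℝ) : ∃ p : ℝ, arcDist p m₁ ≤ π / 4 ∧
    (arcDist p m₂ ≤ π / 4 ∨ arcDist (p + π) m₂ ≤ π / 4) := by
  obtain ⟨n, hn⟩ := arc_spec m₁ m₂
  have hle := arc_le_pi m₁ m₂
  rw [hn] at hle
  obtain ⟨l1, l2⟩ := abs_le.1 hle
  set d := m₁ - m₂ + 2 * π * n with hd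
  have hp := pi_pos
  rcases le_total |d| (π / 2) with h | h
  · obtain ⟨k1, k2⟩ := abs_le.1 h
    refine ⟨m₁ - d / 2, ?_, Or.inl ?_⟩
    · refine (arc_le_abs _ _).trans ?_
      rw [abs_le]; constructor <;> linarith
    · refine (arc_le _ _ n).trans ?_
      rw [abs_le]; constructor <;> linarith
  · rcases le_abs.1 h with k | k
    · refine ⟨m₁ - (d - π) / 2, ?_, Or.inr ?_⟩
      · refine (arc_le_abs _ _).trans ?_
        rw [abs_le]; constructor <;> linarith
      · refine (arc_le _ _ (n - 1)).trans ?_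
        push_cast
        rw [abs_le]; constructor <;> linarith
    · refine ⟨m₁ - (d + π) / 2, ?_, Or.inr ?_⟩
      · refine (arc_le_abs _ _).trans ?_
        rw [abs_le]; constructor <;> linarith
      · refine (arc_le _ _ n).trans ?_
        rw [abs_le]; constructor <;> linarith

lemma low2 {θs D ε : ℝ} (hθ0 : 0 ≤ θs) (hθ1 : θs ≤ π / 2) (hθ : θs + sin θs = π - π / 2)
    (hε : 0 < ε) (hε1 : ε < 1 / 100) (hD : D = π - (θs - sin θs) - ε)
    (l : List (ℝ × ℝ)) (hlen : l.length = 2) (hl : Desc l) (h : ∀ p q, DL l p q ≤ D) : False := by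
  have p1 := pi_gt_d6
  have p2 := pi_lt_d6
  have hlb : 831 / 1000 ≤ θs := by
    refine theta_lb hθ0 (by linarith) hθ ?_
    have := sinU9 (831 / 1000) (by norm_num)
    norm_num at this ⊢
    linarith
  have hub : θs ≤ 833 / 1000 := by
    by_contra hc
    push Not at hc
    have h1 := sin_mono (a := 833 / 1000) (by linarith) hc.le hθ1
    have := sinL7 (833 / 1000) (by norm_num)
    norm_num at this h1
    linarith
  obtain ⟨s, t, rfl⟩ := List.length_eq_two.1 hlen
  have hst : hArc t ≤ hArc s := by
    rw [Desc, List.pairwise_cons] at hl; exact hl.1 t (by simp)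
  have cs := chord_hArc s
  have ct := chord_hArc t
  have s0 := hArc_nonneg s
  have s2 := hArc_le s
  have t0 := hArc_nonneg t
  have t2 := hArc_le t
  have ss0 := sin_hArc_nonneg s
  have st0 := sin_hArc_nonneg t
  have ss1 := sin_le_one (hArc s)
  have st1 := sin_le_one (hArc t)
  have hsin : sin (hArc t) ≤ sin (hArc s) := sin_mono (by linarith) hst s2
  rcases le_total θs (hArc t) with h1 | h1
  · have g1 : sin θs ≤ sin (hArc t) := sin_mono (by linarith) h1 t2
    have j1 := half_le_two_sin s0 s2
    obtain ⟨m₁, e1, e2⟩ := mid_exists s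
    obtain ⟨m₂, f1, f2⟩ := mid_exists t
    obtain ⟨p, hp1, hp2⟩ := centre_exists m₁ m₂
    have hpq : arcDist p (p + π) = π := by
      have e : |p - (p + π)| = π := by rw [sub_add_cancel_left, abs_neg, abs_of_pos pi_pos]
      rw [arc_of_abs_le (by rw [e]), e]
    have hqp : arcDist (p + π) p = π := by rw [arc_comm]; exact hpq
    have hDL := h p (p + π)
    obtain ⟨u1, u2⟩ := near_bounds hpq e1 hp1
    obtain ⟨u3, u4⟩ := near_bounds hpq e2 hp1
    have : D + ε ≤ DL [s, t] p (p + π) := by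
      rcases hp2 with hp2 | hp2
      · obtain ⟨v1, v2⟩ := near_bounds hpq f1 hp2
        obtain ⟨v3, v4⟩ := near_bounds hpq f2 hp2
        refine DL_two_bound s t p (p + π) (D + ε) _ _ _ _ ?_ u1 u3 u2 u4 v1 v3 v2 v4 ?_ ?_ ?_ ?_ ?_
        · rw [hpq]; linarith
        all_goals linarith
      · obtain ⟨v1, v2⟩ := near_bounds hqp f1 hp2
        obtain ⟨v3, v4⟩ := near_bounds hqp f2 hp2
        refine DL_two_bound s t p (p + π) (D + ε) _ _ _ _ ?_ u1 u3 u2 u4 v2 v4 v1 v3 ?_ ?_ ?_ ?_ ?_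
        · rw [hpq]; linarith
        all_goals linarith
    linarith
  · have hδ : hArc t - sin (hArc t) ≤ θs - sin θs := by linarith [sin_sub_le h1]
    have htpos := sin_le t0
    have st3 := sinL3 (hArc t) t0
    rcases le_total (62 / 100) (hArc t) with h2 | h2
    · -- comparable shortcuts
      set θ := hArc t with hθt
      have hcube : θ ^ 3 ≤ 1.6108 * θ - 0.76 := by
        nlinarith [mul_nonneg (mul_nonneg (sub_nonneg.2 h2) (by linarith : 0 ≤ 84 / 100 - θ)) t0,
          mul_nonneg (sub_nonneg.2 h2) (by linarith : 0 ≤ 84 / 100 - θ)]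
      have c0 : Cov (GG [t] (θs - sin θs) D) (0 + (D - 2 * sin θ)) := by
        refine GG_step1 (hArc_eq t) (by linarith) (by linarith) (by linarith) (by linarith)
          (prov_X [] (by simp)) le_rfl (by linarith) (by linarith) ?_
        rw [GG_nil (by linarith) (by linarith) (by linarith)]
        exact cov_empty
      have c1 := GG_step2 (hArc_eq s) (by linarith) (by linarith)
        (ρ := D - 2 * sin (hArc s) + 4 * (θ - sin θ)) (by linarith) (by linarith)
        (prov_S t (hArc_eq t)) (by linarith) (by linarith) c0
      have := no_cov h c1
      linarith
    · have s62 := sinL7 (62 / 100) (by norm_num)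
      have hd := sin_sub_le h2
      norm_num at s62 hd
      have c0 : Cov (GG [t] 0 D) 0 := by
        refine GG_step0 (hArc_eq t) (ρ := D - 2 * sin (hArc t)) (by linarith) (by linarith)
          (by linarith) (by linarith) (prov_X [] (by simp)) (by linarith) ?_
        rw [GG_nil (by linarith) (by linarith) (by linarith)]
        exact cov_empty
      have s4 := sinL7 (4 / 10) (by norm_num)
      norm_num at s4
      rcases le_total (hArc s) (4 / 10) with h3 | h3
      · have hd1 := sin_sub_le h3
        have hd2 := sin_sub_le (hst.trans h3)
        norm_num at hd1 hd2
        have c1 := GG_step0 (hArc_eq s) le_rfl (by linarith)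
          (ρ := D - 2 * sin (hArc s) + 4 * (hArc t - sin (hArc t))) (by linarith) (by linarith)
          (prov_S t (hArc_eq t)) (by linarith) c0
        linarith [no_cov h c1]
      · have hs4 := sin_mono (by linarith) h3 s2
        norm_num at hs4
        have c1 := GG_step2 (hArc_eq s) le_rfl (by linarith)
          (ρ := D - 2 * sin (hArc s) + 4 * (hArc t - sin (hArc t))) (by linarith) (by linarith)
          (prov_S t (hArc_eq t)) le_rfl (by linarith) c0
        linarith [no_cov h c1]

/-! ### From lists of shortcuts to the network distance -/

lemma dS_set_bdd (S : Finset (ℝ × ℝ)) (p q : ℝ) :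
    BddBelow {c | ∃ L : List (ℝ × ℝ), (∀ e ∈ L, e ∈ S ∨ (e.2, e.1) ∈ S) ∧ c = walkCost q p L} := by
  refine ⟨0, ?_⟩
  rintro c ⟨L, hL, rfl⟩
  refine (DL_nonneg S.toList p q).trans (DL_le_walk S.toList q L ?_ p)
  simpa using hL

lemma dS_le_walk (S : Finset (ℝ × ℝ)) (p q : ℝ) (L : List (ℝ × ℝ))
    (hL : ∀ e ∈ L, e ∈ S ∨ (e.2, e.1) ∈ S) : dS S p q ≤ walkCost q p L :=
  csInf_le (dS_set_bdd S p q) ⟨L, hL, rfl⟩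

lemma dS_le_arc (S : Finset (ℝ × ℝ)) (p q : ℝ) : dS S p q ≤ arcDist p q :=
  dS_le_walk S p q [] (by simp)

lemma dS_le_diamS (S : Finset (ℝ × ℝ)) (p q : ℝ) : dS S p q ≤ diamS S := by
  refine le_csSup ⟨π, ?_⟩ ⟨p, q, rfl⟩
  rintro d ⟨p', q', rfl⟩
  exact (dS_le_arc S p' q').trans (arc_le_pi p' q')

lemma diamS_le {S : Finset (ℝ × ℝ)} {D : ℝ} (h : ∀ p q, dS S p q ≤ D) : diamS S ≤ D := by
  refine csSup_le ⟨_, 0, 0, rfl⟩ ?_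
  rintro d ⟨p, q, rfl⟩
  exact h p q

lemma DL_le_dS (S : Finset (ℝ × ℝ)) (l : List (ℝ × ℝ)) (hl : ∀ s, s ∈ l ↔ s ∈ S) (p q : ℝ) :
    DL l p q ≤ dS S p q := by
  refine le_csInf ⟨_, [], by simp, rfl⟩ ?_
  rintro c ⟨L, hL, rfl⟩
  refine DL_le_walk l q L ?_ p
  intro e he
  rw [hl, hl]
  exact hL e he

lemma exists_desc (S : Finset (ℝ × ℝ)) : ∃ l : List (ℝ × ℝ), Desc l ∧ l.length = S.card ∧
    ∀ s, s ∈ l ↔ s ∈ S := by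
  classical
  let r : ℝ × ℝ → ℝ × ℝ → Prop := fun a b => hArc b ≤ hArc a
  have : Std.Total r := ⟨fun a b => le_total _ _⟩
  have : IsTrans (ℝ × ℝ) r := ⟨fun a b c h1 h2 => le_trans h2 h1⟩
  refine ⟨S.toList.insertionSort r, List.pairwise_insertionSort r _, ?_, ?_⟩
  · rw [List.length_insertionSort, Finset.length_toList]
  · intro s
    rw [List.mem_insertionSort, Finset.mem_toList]

lemma lower_bound {k : ℕ} (hk : k ∈ ({2, 3, 4, 5} : Set ℕ)) {θs : ℝ} (hθ0 : 0 ≤ θs)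
    (hθ1 : θs ≤ π / 2) (hθ : θs + sin θs = π - π / k) (S : Finset (ℝ × ℝ)) (hS : S.card = k) :
    π - (θs - sin θs) ≤ diamS S := by
  by_contra hc
  push Not at hc
  obtain ⟨l, hd, hlen, hmem⟩ := exists_desc S
  set D := max (diamS S) (π - (θs - sin θs) - 1 / 200) with hD
  have hD1 : D < π - (θs - sin θs) := max_lt hc (by linarith)
  have hD2 : π - (θs - sin θs) - 1 / 200 ≤ D := le_max_right _ _
  have hall : ∀ p q, DL l p q ≤ D := fun p q =>
    ((DL_le_dS S l hmem p q).trans (dS_le_diamS S p q)).trans (le_max_left _ _)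
  have e1 : 0 < π - (θs - sin θs) - D := by linarith
  have e2 : π - (θs - sin θs) - D < 1 / 100 := by linarith
  have e3 : D = π - (θs - sin θs) - (π - (θs - sin θs) - D) := by ring
  rw [hS] at hlen
  simp only [Set.mem_insert_iff, Set.mem_singleton_iff] at hk
  rcases hk with rfl | rfl | rfl | rfl
  · exact low2 hθ0 hθ1 (by exact_mod_cast hθ) e1 e2 e3 l hlen hd hall
  · exact low3 hθ0 hθ1 (by exact_mod_cast hθ) e1 e2 e3 l hlen hd hall
  · exact low4 hθ0 hθ1 (by exact_mod_cast hθ) e1 e2 e3 l hlen hd hall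
  · exact low5 hθ0 hθ1 (by exact_mod_cast hθ) e1 e2 e3 l hlen hd hall

/-! ### The upper bound -/

/-- The rotated chords. -/
noncomputable def rotS (k : ℕ) (θ : ℝ) : Finset (ℝ × ℝ) :=
  (Finset.range k).image fun j : ℕ => ((j : ℝ) * π / k - θ, (j : ℝ) * π / k + θ)

lemma abs_add_abs_le {Z w r : ℝ} (hZ : |Z| ≤ r) (hw : |w| ≤ r) :
    |Z - w| + |-Z - w| ≤ 2 * r := by
  obtain ⟨a1, a2⟩ := abs_le.1 hZ
  obtain ⟨b1, b2⟩ := abs_le.1 hw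
  rcases abs_cases (Z - w) with h | h <;> rcases abs_cases (-Z - w) with h' | h' <;> linarith

lemma arc_centred {c θ : ℝ} (h0 : 0 ≤ θ) (h1 : θ ≤ π / 2) : arcDist (c - θ) (c + θ) = 2 * θ := by
  have e : |c - θ - (c + θ)| = 2 * θ := by
    have : c - θ - (c + θ) = -(2 * θ) := by ring
    rw [this, abs_neg, abs_of_nonneg (by linarith)]
  rw [arc_of_abs_le (by rw [e]; linarith), e]

lemma upper_core {k : ℕ} (hk : 0 < k) {θ : ℝ} (h0 : 0 ≤ θ) (h1 : θ ≤ π / 2)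
    (hθ : θ + sin θ = π - π / k) (hδ : θ - sin θ ≤ π / k) (p y : ℝ) (N : ℤ)
    (hy1 : π - (θ - sin θ) ≤ y) (hy2 : y ≤ π) :
    ∃ u v, ((u, v) ∈ rotS k θ ∨ (v, u) ∈ rotS k θ) ∧
      arcDist p u + chordLen u v + arcDist v (p + y + 2 * π * N) ≤ π - (θ - sin θ) := by
  have hkr : (0 : ℝ) < k := by exact_mod_cast hk
  set P := π / k with hP
  have hP0 : 0 < P := div_pos pi_pos hkr
  have hkP : k * P = π := by rw [hP]; field_simp
  have hsθ : sin θ ≤ θ := sin_le h0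
  set z := p + y / 2 with hz
  set M : ℤ := round (z / P) with hM
  have hZ : |z - M * P| ≤ P / 2 := by
    have h2 := abs_sub_round (z / P)
    have e : z - M * P = (z / P - M) * P := by field_simp
    rw [e, abs_mul, abs_of_pos hP0]
    nlinarith
  set n : ℤ := M / k with hn
  set j : ℤ := M % k with hj
  have hkz : (0 : ℤ) < k := by exact_mod_cast hk
  have hj0 : 0 ≤ j := Int.emod_nonneg _ hkz.ne'
  have hjk : j < k := Int.emod_lt_of_pos _ hkz
  have hMnj : (M : ℝ) = k * n + j := by
    have : M = k * n + j := (Int.mul_ediv_add_emod M k).symm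
    exact_mod_cast this
  have hMP : M * P = n * π + j * P := by
    rw [hMnj, ← hkP]; ring
  obtain ⟨i, hi⟩ := Int.eq_ofNat_of_zero_le hj0
  have hik : i < k := by rw [hi] at hjk; exact_mod_cast hjk
  have hij : (j : ℝ) = i := by rw [hi]; simp
  have hmem : (i * P - θ, i * P + θ) ∈ rotS k θ := by
    rw [rotS, Finset.mem_image]
    refine ⟨i, Finset.mem_range.2 hik, ?_⟩
    rw [hP, mul_div_assoc]
  have hch : chordLen (i * P - θ) (i * P + θ) = 2 * sin θ := by
    unfold chordLen; rw [arc_centred h0 h1]; congr 2; ring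
  rw [hij] at hMP
  rcases Int.even_or_odd' n with ⟨r, hr | hr⟩
  · refine ⟨i * P - θ, i * P + θ, Or.inl hmem, ?_⟩
    have hnr : (n : ℝ) = 2 * r := by rw [hr]; push_cast; ring
    have b1 := arc_le p (i * P - θ) (-r)
    have b2 := arc_le (i * P + θ) (p + y + 2 * π * N) (r + N)
    have e1 : p - (i * P - θ) + 2 * π * ((-r : ℤ) : ℝ) = (z - M * P) - (y / 2 - θ) := by
      rw [hMP, hnr, hz]; push_cast; ring
    have e2 : i * P + θ - (p + y + 2 * π * N) + 2 * π * ((r + N : ℤ) : ℝ)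
        = -(z - M * P) - (y / 2 - θ) := by
      rw [hMP, hnr, hz]; push_cast; ring
    rw [e1] at b1
    rw [e2] at b2
    have := abs_add_abs_le hZ (w := y / 2 - θ) (by rw [abs_le]; constructor <;> linarith)
    rw [hch]
    linarith
  · refine ⟨i * P + θ, i * P - θ, Or.inr hmem, ?_⟩
    have hnr : (n : ℝ) = 2 * r + 1 := by rw [hr]; push_cast; ring
    have b1 := arc_le p (i * P + θ) (-r)
    have b2 := arc_le (i * P - θ) (p + y + 2 * π * N) (r + N + 1)
    have e1 : p - (i * P + θ) + 2 * π * ((-r : ℤ) : ℝ) = (z - M * P) - (y / 2 + θ - π) := by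
      rw [hMP, hnr, hz]; push_cast; ring
    have e2 : i * P - θ - (p + y + 2 * π * N) + 2 * π * ((r + N + 1 : ℤ) : ℝ)
        = -(z - M * P) - (y / 2 + θ - π) := by
      rw [hMP, hnr, hz]; push_cast; ring
    rw [e1] at b1
    rw [e2] at b2
    have := abs_add_abs_le hZ (w := y / 2 + θ - π) (by rw [abs_le]; constructor <;> linarith)
    rw [chord_comm, hch]
    linarith

lemma upper_bound {k : ℕ} (hk : 0 < k) {θ : ℝ} (h0 : 0 ≤ θ) (h1 : θ ≤ π / 2)
    (hθ : θ + sin θ = π - π / k) (hδ : θ - sin θ ≤ π / k) :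
    diamS (rotS k θ) ≤ π - (θ - sin θ) := by
  refine diamS_le fun p q => ?_
  rcases le_total (arcDist p q) (π - (θ - sin θ)) with h | h
  · exact (dS_le_arc _ p q).trans h
  have hpi := arc_le_pi p q
  have key : ∃ u v, ((u, v) ∈ rotS k θ ∨ (v, u) ∈ rotS k θ) ∧
      arcDist p u + chordLen u v + arcDist v q ≤ π - (θ - sin θ) := by
    obtain ⟨n, hn⟩ := arc_spec p q
    rcases abs_cases (p - q + 2 * π * n) with hc | hc
    · obtain ⟨u, v, hm, hle⟩ := upper_core hk h0 h1 hθ hδ q (arcDist p q) (-n) h hpi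
      have e : q + arcDist p q + 2 * π * ((-n : ℤ) : ℝ) = p := by
        rw [hn, hc.1]; push_cast; ring
      rw [e] at hle
      refine ⟨v, u, hm.symm, ?_⟩
      rw [arc_comm p v, chord_comm v u, arc_comm u q]
      linarith
    · obtain ⟨u, v, hm, hle⟩ := upper_core hk h0 h1 hθ hδ p (arcDist p q) n h hpi
      have e : p + arcDist p q + 2 * π * (n : ℝ) = q := by
        rw [hn, hc.1]; ring
      rw [e] at hle
      exact ⟨u, v, hm, hle⟩
  obtain ⟨u, v, hm, hle⟩ := key
  refine (dS_le_walk _ p q [(u, v)] ?_).trans ?_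
  · intro e he
    rw [List.mem_singleton] at he
    subst he
    exact hm
  · simp only [walkCost]
    exact hle

lemma rotS_card {k : ℕ} (hk : 0 < k) (θ : ℝ) : (rotS k θ).card = k := by
  have hkr : (0 : ℝ) < k := by exact_mod_cast hk
  rw [rotS, Finset.card_image_of_injective, Finset.card_range]
  intro i j hij
  have h1 : (i : ℝ) * π / k - θ = (j : ℝ) * π / k - θ := congrArg Prod.fst hij
  have h2 : (i : ℝ) * π / k = (j : ℝ) * π / k := by linarith
  rw [div_left_inj' hkr.ne'] at h2
  have h3 := mul_right_cancel₀ pi_pos.ne' h2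
  exact_mod_cast h3

lemma rotS_shortcut {k : ℕ} {θ : ℝ} (h0 : 0 < θ) (h1 : θ ≤ π / 2) :
    ∀ s ∈ rotS k θ, IsShortcut s := by
  intro s hs
  rw [rotS, Finset.mem_image] at hs
  obtain ⟨j, -, rfl⟩ := hs
  show arcDist _ _ ≠ 0
  rw [arc_centred h0.le h1]
  linarith

/-- for `k ∈ {2,3,4,5}`, `diam(k) = π - δ*_k`, attained by the `k` chords of
length `a*_k` obtained from one fixed chord by rotations through `jπ/k`, `j = 0,…,k-1`. -/
theorem stmt1 (k : ℕ) (hk : k ∈ ({2, 3, 4, 5} : Set ℕ)) (a : ℝ)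
    (ha : a ∈ Set.Icc (0 : ℝ) 2) (hastar : a + sdelta a = ((k : ℝ) - 1) * π / k) :
    diamK k = π - sdelta a ∧
    diamS ((Finset.range k).image fun j : ℕ =>
        ((j : ℝ) * π / k - Real.arcsin (a / 2), (j : ℝ) * π / k + Real.arcsin (a / 2)))
      = π - sdelta a := by
  obtain ⟨ha0, ha2⟩ := ha
  have hsin : sin (arcsin (a / 2)) = a / 2 := sin_arcsin (by linarith) (by linarith)
  have h0 : 0 ≤ arcsin (a / 2) := arcsin_nonneg.2 (by linarith)
  have h1 : arcsin (a / 2) ≤ π / 2 := arcsin_le_pi_div_two _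
  have hsd : sdelta a = arcsin (a / 2) - sin (arcsin (a / 2)) := by rw [hsin, sdelta]
  have hk2 : 2 ≤ k ∧ k ≤ 5 := by
    simp only [Set.mem_insert_iff, Set.mem_singleton_iff] at hk
    omega
  have hk0 : 0 < k := by omega
  have hkr : (0 : ℝ) < k := by exact_mod_cast hk0
  have hkr2 : (2 : ℝ) ≤ k := by exact_mod_cast hk2.1
  have hkr5 : (k : ℝ) ≤ 5 := by exact_mod_cast hk2.2
  have hθ : arcsin (a / 2) + sin (arcsin (a / 2)) = π - π / k := by
    rw [hsin]
    have e : ((k : ℝ) - 1) * π / k = π - π / k := by field_simp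
    rw [e, sdelta] at hastar
    linarith
  have hP2 : π / k ≤ π / 2 := by
    rw [div_le_div_iff_of_pos_left pi_pos hkr (by norm_num)]; exact hkr2
  have hP5 : π / 5 ≤ π / k := by
    rw [div_le_div_iff_of_pos_left pi_pos (by norm_num) hkr]; exact hkr5
  have hδ : arcsin (a / 2) - sin (arcsin (a / 2)) ≤ π / k := by
    linarith [delta_ub h1, pi_lt_d6]
  have hpos : 0 < arcsin (a / 2) := by
    rcases h0.eq_or_lt with h | h
    · rw [← h, sin_zero] at hθ
      linarith [pi_pos]
    · exact h
  have hS : diamS (rotS k (arcsin (a / 2))) = π - sdelta a := by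
    rw [hsd]
    exact le_antisymm (upper_bound hk0 h0 h1 hθ hδ)
      (lower_bound hk h0 h1 hθ _ (rotS_card hk0 _))
  refine ⟨?_, hS⟩
  apply IsLeast.csInf_eq
  refine ⟨⟨rotS k (arcsin (a / 2)), rotS_card hk0 _, rotS_shortcut hpos h1, hS.symm⟩, ?_⟩
  rintro d ⟨S, hcard, -, rfl⟩
  rw [hsd]
  exact lower_bound hk h0 h1 hθ S hcard
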